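/- arXiv:0805.0582 — 2 statements merged into one kernel-verified Lean document; each statement's English description precedes it below -/
import Mathlib

section
/- Assume conditions (i)–(iii) hold and f is convolution invertible with inverse f^{-1}. Let (E ⊗_k Ā^{⊗*}, b) be the Hochschild complex of A with coefficients in E = A #_f H and, for h ∈ H, let ϑ^h be the chain endomorphism ϑ^h(x ⊗ ā_1 ⊗ ⋯ ⊗ ā_r) = γ(h^{(3)}) x γ^{-1}(h^{(1)}) ⊗ class of (a_1 ⊗ ⋯ ⊗ a_r)^{h^{(2)}}. Then for all h, l ∈ H, the endomorphisms of the homology H_*(A, E) of (E ⊗_k Ā^{⊗*}, b) induced by ϑ^h∘ϑ^l and by ϑ^{hl} coincide in every degree; consequently H_*(A, E) is a left H-module. -/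
open TensorProduct

noncomputable section CrossedProduct

variable (k A H : Type*) [CommRing k] [Ring A] [Algebra k A] [Ring H] [HopfAlgebra k H]

/-- A chosen "Sweedler representation" of the comultiplication of `H`:
`comul h = ∑_{i < n h} c₁ h i ⊗ c₂ h i` for every `h`. -/
def IsSweedlerRep (n : H → ℕ) (c₁ c₂ : H → ℕ → H) : Prop :=
  ∀ h : H, Coalgebra.comul (R := k) h = ∑ i ∈ Finset.range (n h), c₁ h i ⊗ₜ[k] c₂ h i

/-- `σ` is a weak action of `H` on `A`: `(ab)^h = a^{h⁽¹⁾} b^{h⁽²⁾}`, `1^h = ε(h)1`, `a^1 = a`. -/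
def IsWeakAction (n : H → ℕ) (c₁ c₂ : H → ℕ → H) (σ : H →ₗ[k] A →ₗ[k] A) : Prop :=
  (∀ (h : H) (a b : A),
      σ h (a * b) = ∑ i ∈ Finset.range (n h), σ (c₁ h i) a * σ (c₂ h i) b) ∧
  (∀ h : H, σ h (1 : A) = Coalgebra.counit (R := k) h • (1 : A)) ∧
  (∀ a : A, σ (1 : H) a = a)

/-- Condition (i): normality of the cocycle `f`. -/
def IsNormal (f : H →ₗ[k] H →ₗ[k] A) : Prop :=
  ∀ h : H, f h (1 : H) = Coalgebra.counit (R := k) h • (1 : A) ∧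
    f (1 : H) h = Coalgebra.counit (R := k) h • (1 : A)

/-- Condition (ii): the cocycle condition
`f(l⁽¹⁾,m⁽¹⁾)^{h⁽¹⁾} f(h⁽²⁾, l⁽²⁾m⁽²⁾) = f(h⁽¹⁾,l⁽¹⁾) f(h⁽²⁾l⁽²⁾, m)`. -/
def IsCocycle (n : H → ℕ) (c₁ c₂ : H → ℕ → H) (σ : H →ₗ[k] A →ₗ[k] A)
    (f : H →ₗ[k] H →ₗ[k] A) : Prop :=
  ∀ h l m : H,
    (∑ i ∈ Finset.range (n h), ∑ j ∈ Finset.range (n l), ∑ p ∈ Finset.range (n m),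
      σ (c₁ h i) (f (c₁ l j) (c₁ m p)) * f (c₂ h i) (c₂ l j * c₂ m p)) =
    ∑ i ∈ Finset.range (n h), ∑ j ∈ Finset.range (n l),
      f (c₁ h i) (c₁ l j) * f (c₂ h i * c₂ l j) m

/-- Condition (iii): the twisted module condition
`(a^{l⁽¹⁾})^{h⁽¹⁾} f(h⁽²⁾,l⁽²⁾) = f(h⁽¹⁾,l⁽¹⁾) a^{h⁽²⁾l⁽²⁾}`. -/
def IsTwistedModule (n : H → ℕ) (c₁ c₂ : H → ℕ → H) (σ : H →ₗ[k] A →ₗ[k] A)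
    (f : H →ₗ[k] H →ₗ[k] A) : Prop :=
  ∀ (h l : H) (a : A),
    (∑ i ∈ Finset.range (n h), ∑ j ∈ Finset.range (n l),
      σ (c₁ h i) (σ (c₁ l j) a) * f (c₂ h i) (c₂ l j)) =
    ∑ i ∈ Finset.range (n h), ∑ j ∈ Finset.range (n l),
      f (c₁ h i) (c₁ l j) * σ (c₂ h i * c₂ l j) a

/-- `finv` is the convolution inverse of `f`:
`f(h⁽¹⁾,l⁽¹⁾) f⁻¹(h⁽²⁾,l⁽²⁾) = f⁻¹(h⁽¹⁾,l⁽¹⁾) f(h⁽²⁾,l⁽²⁾) = ε(h)ε(l)1_A`. -/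
def IsConvInverse (n : H → ℕ) (c₁ c₂ : H → ℕ → H) (f finv : H →ₗ[k] H →ₗ[k] A) : Prop :=
  ∀ h l : H,
    (∑ i ∈ Finset.range (n h), ∑ j ∈ Finset.range (n l),
        f (c₁ h i) (c₁ l j) * finv (c₂ h i) (c₂ l j) =
      (Coalgebra.counit (R := k) h * Coalgebra.counit (R := k) l) • (1 : A)) ∧
    (∑ i ∈ Finset.range (n h), ∑ j ∈ Finset.range (n l),
        finv (c₁ h i) (c₁ l j) * f (c₂ h i) (c₂ l j) =
      (Coalgebra.counit (R := k) h * Coalgebra.counit (R := k) l) • (1 : A))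

/-- The multiplication of `A #_f H` as a bilinear map on `A ⊗[k] H`:
`(a # h)(b # l) = a b^{h⁽¹⁾} f(h⁽²⁾, l⁽¹⁾) # h⁽³⁾ l⁽²⁾`. -/
def crossedMul (σ : H →ₗ[k] A →ₗ[k] A) (f : H →ₗ[k] H →ₗ[k] A) :
    (A ⊗[k] H) →ₗ[k] (A ⊗[k] H) →ₗ[k] (A ⊗[k] H) :=
  TensorProduct.lift
    (((LinearMap.llcomp k (A ⊗[k] H) (A ⊗[k] H) (A ⊗[k] H)).comp
        (TensorProduct.curry
          ((LinearMap.rTensor H (LinearMap.mul' k A)) ∘ₗ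
            (TensorProduct.assoc k A A H).symm.toLinearMap))).compl₂
      (TensorProduct.curry
        ((LinearMap.rTensor H (LinearMap.mul' k A)) ∘ₗ
         (TensorProduct.map
            (TensorProduct.map (TensorProduct.lift σ) (TensorProduct.lift f))
            (LinearMap.mul' k H)) ∘ₗ
         (LinearMap.rTensor (H ⊗[k] H)
            (TensorProduct.tensorTensorTensorComm k H H A H).toLinearMap) ∘ₗ
         (TensorProduct.tensorTensorTensorComm k (H ⊗[k] H) H (A ⊗[k] H) H).toLinearMap ∘ₗ
         (TensorProduct.map
            ((LinearMap.rTensor H (Coalgebra.comul (R := k))) ∘ₗ (Coalgebra.comul (R := k)))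
            ((TensorProduct.assoc k A H H).symm.toLinearMap ∘ₗ
              (LinearMap.lTensor A (Coalgebra.comul (R := k))))))))

/-- The unit `1 # 1` of the crossed product. -/
def oneE : A ⊗[k] H := (1 : A) ⊗ₜ[k] (1 : H)

/-- The map `γ : H → A #_f H`, `γ(h) = 1 # h`. -/
def gam : H →ₗ[k] A ⊗[k] H := TensorProduct.mk k A H 1

/-- The map `h ↦ f⁻¹(S(h⁽²⁾), h⁽³⁾) # S(h⁽¹⁾)`, the convolution inverse of `γ`. -/
def gammaInv (finv : H →ₗ[k] H →ₗ[k] A) : H →ₗ[k] A ⊗[k] H :=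
  (TensorProduct.comm k H A).toLinearMap ∘ₗ
    (TensorProduct.map (HopfAlgebra.antipode (R := k))
      ((TensorProduct.lift finv) ∘ₗ (LinearMap.rTensor H (HopfAlgebra.antipode (R := k))))) ∘ₗ
    (LinearMap.lTensor H (Coalgebra.comul (R := k))) ∘ₗ (Coalgebra.comul (R := k))

/-- The canonical coaction `ν = id_A ⊗ Δ : A #_f H → (A #_f H) ⊗ H`. -/
def nuE : (A ⊗[k] H) →ₗ[k] (A ⊗[k] H) ⊗[k] H :=
  (TensorProduct.assoc k A H H).symm.toLinearMap ∘ₗ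
    (LinearMap.lTensor A (Coalgebra.comul (R := k)))

/-- Convolution product on `Hom_k(H, A #_f H)`: `(u * v)(h) = u(h⁽¹⁾) v(h⁽²⁾)`. -/
def convMul (σ : H →ₗ[k] A →ₗ[k] A) (f : H →ₗ[k] H →ₗ[k] A)
    (u v : H →ₗ[k] A ⊗[k] H) : H →ₗ[k] A ⊗[k] H :=
  (TensorProduct.lift (crossedMul k A H σ f)) ∘ₗ (TensorProduct.map u v) ∘ₗ
    (Coalgebra.comul (R := k))

/-- The unit of the convolution algebra `Hom_k(H, A #_f H)`: `h ↦ ε(h) 1_E`. -/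
def convOne : H →ₗ[k] A ⊗[k] H :=
  (LinearMap.toSpanSingleton k (A ⊗[k] H) (oneE k A H)) ∘ₗ (Coalgebra.counit (R := k))

/-- Sum over iterated (right-nested) Sweedler components:
`swSum n c₁ c₂ r h F = ∑ F (h⁽¹⁾, …, h⁽ʳ⁺¹⁾)`. -/
def swSum {M : Type*} [AddCommMonoid M] (n : H → ℕ) (c₁ c₂ : H → ℕ → H) :
    (r : ℕ) → H → ((Fin (r + 1) → H) → M) → M
  | 0, h, F => F (fun _ => h)
  | (r + 1), h, F =>
      ∑ i ∈ Finset.range (n h), swSum n c₁ c₂ r (c₂ h i) (fun g => F (Fin.cons (c₁ h i) g))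

/-- The product of a list of elements of the crossed product. -/
def prodE (σ : H →ₗ[k] A →ₗ[k] A) (f : H →ₗ[k] H →ₗ[k] A) :
    List (A ⊗[k] H) → A ⊗[k] H
  | [] => oneE k A H
  | x :: L => crossedMul k A H σ f x (prodE σ f L)

end CrossedProduct
open TensorProduct
noncomputable section HochAux

/-- Prepend an element to a sequence. -/
def ncons {X : Type*} (a : X) (g : ℕ → X) : ℕ → X
  | 0 => a
  | i + 1 => g i

@[simp] theorem ncons_zero {X : Type*} (a : X) (g : ℕ → X) : ncons a g 0 = a := rfl
@[simp] theorem ncons_succ {X : Type*} (a : X) (g : ℕ → X) (i : ℕ) : ncons a g (i + 1) = g i := rfl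

/-- Multiply together the entries `j` and `j+1` of a sequence. -/
def mrg {X : Type*} [Mul X] (j : ℕ) (e : ℕ → X) : ℕ → X :=
  fun m => if m < j then e m else if m = j then e j * e (j + 1) else e (m + 1)

/-- Iterated Sweedler sums, with sequences as arguments. -/
def sw {C M : Type*} [AddCommMonoid M] (n : C → ℕ) (c₁ c₂ : C → ℕ → C) :
    (m : ℕ) → C → ((ℕ → C) → M) → M
  | 0, c, F => F (fun _ => c)
  | (m + 1), c, F =>
      ∑ i ∈ Finset.range (n c), sw n c₁ c₂ m (c₂ c i) (fun g => F (ncons (c₁ c i) g))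

section swbasic
variable {C M N : Type*} [AddCommMonoid M] [AddCommMonoid N] (n : C → ℕ) (c₁ c₂ : C → ℕ → C)

theorem sw_add (m : ℕ) (c : C) (F F' : (ℕ → C) → M) :
    sw n c₁ c₂ m c (fun v => F v + F' v) = sw n c₁ c₂ m c F + sw n c₁ c₂ m c F' := by
  induction m generalizing c F F' with
  | zero => rfl
  | succ m ih => simp only [sw, ih, Finset.sum_add_distrib]

theorem sw_zero (m : ℕ) (c : C) :
    sw n c₁ c₂ m c (fun _ => (0 : M)) = 0 := by
  induction m generalizing c with
  | zero => rfl
  | succ m ih => simp only [sw, ih, Finset.sum_const_zero]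

theorem sw_map {Φ : Type*} [FunLike Φ M N] [AddMonoidHomClass Φ M N] (φ : Φ)
    (m : ℕ) (c : C) (F : (ℕ → C) → M) :
    φ (sw n c₁ c₂ m c F) = sw n c₁ c₂ m c (fun v => φ (F v)) := by
  induction m generalizing c F with
  | zero => rfl
  | succ m ih => simp only [sw, map_sum, ih]

theorem sw_sum {κ : Type*} (s : Finset κ) (m : ℕ) (c : C) (F : κ → (ℕ → C) → M) :
    sw n c₁ c₂ m c (fun v => ∑ j ∈ s, F j v) = ∑ j ∈ s, sw n c₁ c₂ m c (F j) := by
  classical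
  induction s using Finset.induction_on with
  | empty => simp [sw_zero]
  | insert a s ha ih => simp only [Finset.sum_insert ha, sw_add, ih]

theorem sw_smul {k : Type*} [Semiring k] [Module k M] (t : k) (m : ℕ) (c : C) (F : (ℕ → C) → M) :
    sw n c₁ c₂ m c (fun v => t • F v) = t • sw n c₁ c₂ m c F := by
  induction m generalizing c F with
  | zero => rfl
  | succ m ih => simp only [sw, ih, Finset.smul_sum]

end swbasic

section coalg
variable {k C E M : Type*} [CommRing k] [AddCommGroup C] [Module k C] [Coalgebra k C]
  [Ring E] [Algebra k E] [AddCommGroup M] [Module k M]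
  {n : C → ℕ} {c₁ c₂ : C → ℕ → C}

/-- A Sweedler representation. -/
def IsRep (k : Type*) {C : Type*} [CommRing k] [AddCommGroup C] [Module k C] [Coalgebra k C]
    (n : C → ℕ) (c₁ c₂ : C → ℕ → C) : Prop :=
  ∀ h : C, Coalgebra.comul (R := k) h = ∑ i ∈ Finset.range (n h), c₁ h i ⊗ₜ[k] c₂ h i

theorem exists_isRep (k C : Type*) [CommRing k] [AddCommGroup C] [Module k C] [Coalgebra k C] :
    ∃ (n : C → ℕ) (c₁ c₂ : C → ℕ → C), IsRep k n c₁ c₂ := by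
  have h : ∀ c : C, ∃ (m : ℕ) (a b : ℕ → C),
      Coalgebra.comul (R := k) c = ∑ i ∈ Finset.range m, a i ⊗ₜ[k] b i := by
    intro c
    induction Coalgebra.comul (R := k) c using TensorProduct.induction_on with
    | zero => exact ⟨0, fun _ => 0, fun _ => 0, by simp⟩
    | tmul x y => exact ⟨1, fun _ => x, fun _ => y, by simp⟩
    | add x y hx hy =>
      obtain ⟨m, a, b, h⟩ := hx
      obtain ⟨m', a', b', h'⟩ := hy
      refine ⟨m + m', fun i => if i < m then a i else a' (i - m),
        fun i => if i < m then b i else b' (i - m), ?_⟩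
      rw [Finset.sum_range_add, h, h']
      congr 1
      · refine Finset.sum_congr rfl fun i hi => ?_
        simp [Finset.mem_range.1 hi]
      · simp
  choose m a b h using h
  exact ⟨m, a, b, h⟩

theorem coassoc_sum (hrep : IsRep k n c₁ c₂) (B : C →ₗ[k] C →ₗ[k] C →ₗ[k] M) (c : C) :
    ∑ i ∈ Finset.range (n c), ∑ j ∈ Finset.range (n (c₁ c i)),
      B (c₁ (c₁ c i) j) (c₂ (c₁ c i) j) (c₂ c i) =
    ∑ i ∈ Finset.range (n c), ∑ j ∈ Finset.range (n (c₂ c i)),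
      B (c₁ c i) (c₁ (c₂ c i) j) (c₂ (c₂ c i) j) := by
  have h := congrArg (TensorProduct.lift (TensorProduct.uncurry (RingHom.id k) C C M ∘ₗ B))
    (Coalgebra.coassoc_apply (R := k) c)
  rw [hrep c] at h
  simp only [map_sum, LinearMap.rTensor_tmul, LinearMap.lTensor_tmul, hrep (c₁ c _),
    hrep (c₂ c _), TensorProduct.sum_tmul, TensorProduct.tmul_sum, TensorProduct.assoc_tmul,
    TensorProduct.lift.tmul, LinearMap.comp_apply, TensorProduct.uncurry_apply] at h
  exact h

theorem oneSlot_apply (G : MultilinearMap k (fun _ : Fin (0 + 1) => E) M) (e : E) :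
    G.toLinearMap 0 0 e = G (fun _ => e) := by
  rw [MultilinearMap.toLinearMap_apply]
  congr 1
  ext i
  obtain rfl : i = 0 := Fin.ext (by omega)
  simp

/-- Linear version of iterated Sweedler sums. -/
def cvl : (m : ℕ) → (w : ℕ → C →ₗ[k] E) →
    MultilinearMap k (fun _ : Fin (m + 1) => E) M →ₗ[k] C →ₗ[k] M
  | 0, w =>
    { toFun := fun G => G.toLinearMap 0 0 ∘ₗ w 0
      map_add' := fun G G' => by ext; simp
      map_smul' := fun t G => by ext; simp }
  | m + 1, w =>
    { toFun := fun G => TensorProduct.lift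
        ((cvl m (fun i => w (i + 1))) ∘ₗ G.curryLeft ∘ₗ w 0) ∘ₗ Coalgebra.comul
      map_add' := fun G G' => by
        rw [← LinearMap.add_comp]; congr 1; ext x y
        have : (G + G').curryLeft (w 0 x) = G.curryLeft (w 0 x) + G'.curryLeft (w 0 x) := rfl
        simp [this]
      map_smul' := fun t G => by
        rw [RingHom.id_apply, ← LinearMap.smul_comp]; congr 1; ext x y
        have : (t • G).curryLeft (w 0 x) = t • G.curryLeft (w 0 x) := rfl
        simp [this] }

theorem cvl_succ (hrep : IsRep k n c₁ c₂) (m : ℕ) (w : ℕ → C →ₗ[k] E)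
    (G : MultilinearMap k (fun _ : Fin (m + 2) => E) M) (c : C) :
    cvl (m + 1) w G c = ∑ i ∈ Finset.range (n c),
      cvl m (fun i => w (i + 1)) (G.curryLeft (w 0 (c₁ c i))) (c₂ c i) := by
  simp [cvl, hrep c]

theorem fin_ncons {m : ℕ} {X : Type*} (a : X) (g : ℕ → X) :
    (fun i : Fin (m + 1) => ncons a g i) = Fin.cons a (fun i : Fin m => g i) := by
  ext i
  refine Fin.cases ?_ (fun i => ?_) i <;> simp

theorem sw_eq_cvl (hrep : IsRep k n c₁ c₂) (m : ℕ) (w : ℕ → C →ₗ[k] E)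
    (G : MultilinearMap k (fun _ : Fin (m + 1) => E) M) (c : C) :
    sw n c₁ c₂ m c (fun v => G (fun i => w i (v i))) = cvl m w G c := by
  induction m generalizing w c with
  | zero =>
    simp only [sw, cvl, LinearMap.coe_mk, AddHom.coe_mk, LinearMap.comp_apply]
    rw [oneSlot_apply]
    congr 1; ext i
    obtain rfl : i = 0 := Fin.ext (by omega)
    simp
  | succ m ih =>
    rw [cvl_succ hrep]
    simp only [sw]
    refine Finset.sum_congr rfl fun i _ => ?_
    rw [← ih]
    congr 1; ext g
    rw [MultilinearMap.curryLeft_apply]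
    congr 1
    ext j
    refine Fin.cases ?_ (fun j => ?_) j <;> simp

open WithConv

theorem conv_apply_rep (hrep : IsRep k n c₁ c₂) (f g : WithConv (C →ₗ[k] E)) (c : C) :
    (f * g) c = ∑ i ∈ Finset.range (n c), f (c₁ c i) * g (c₂ c i) := by
  rw [LinearMap.convMul_apply, hrep c]; simp

theorem sw_mrg (hrep : IsRep k n c₁ c₂) (m j : ℕ) (hj : j ≤ m) (w : ℕ → WithConv (C →ₗ[k] E))
    (G : MultilinearMap k (fun _ : Fin (m + 1) => E) M) (c : C) :
    sw n c₁ c₂ (m + 1) c (fun v => G (fun i => mrg j (fun t => w t (v t)) i)) =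
    sw n c₁ c₂ m c (fun v => G (fun i => mrg j w i (v i))) := by
  induction m generalizing j w c with
  | zero =>
    obtain rfl : j = 0 := by omega
    simp only [sw]
    have h1 : ∀ e : Fin (0 + 1) → E, G e = G.toLinearMap 0 0 (e 0) := by
      intro e
      rw [oneSlot_apply]; congr 1; ext i
      obtain rfl : i = 0 := Fin.ext (by omega)
      simp
    simp only [h1]
    simp [mrg, conv_apply_rep hrep]
  | succ m ih =>
    rcases j with _ | j
    · have e1 : ∀ g : ℕ → C, G (fun i => mrg 0 w i (g i)) =
          G (fun i => (ncons (w 0 * w 1) (fun t => w (t + 2)) i) (g i)) := by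
        intro g
        congr 1; ext i
        refine Fin.cases ?_ (fun i => ?_) i <;> simp [mrg]
      simp only [e1]
      rw [sw_eq_cvl hrep (m + 1) (fun i => (ncons (w 0 * w 1) (fun t => w (t + 2)) i).ofConv),
        cvl_succ hrep]
      let B : C →ₗ[k] C →ₗ[k] C →ₗ[k] M :=
        ((LinearMap.mul k E).compl₁₂ (w 0).ofConv (w 1).ofConv).compr₂
          (cvl m (fun i => (w (i + 2)).ofConv) ∘ₗ G.curryLeft)
      have hB := coassoc_sum hrep B c
      have hL : ∀ a b c, B a b c = cvl m (fun i => (w (i + 2)).ofConv)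
          (G.curryLeft (w 0 a * w 1 b)) c := fun _ _ _ => rfl
      simp only [ncons_zero, ncons_succ, conv_apply_rep hrep, map_sum, LinearMap.sum_apply]
      simp only [hL] at hB
      rw [hB]
      simp only [sw]
      refine Finset.sum_congr rfl fun i _ => Finset.sum_congr rfl fun j _ => ?_
      rw [← sw_eq_cvl hrep]
      congr 1; ext g
      rw [MultilinearMap.curryLeft_apply]
      congr 1
      ext j
      refine Fin.cases ?_ (fun j => ?_) j <;> simp [mrg]
    · rw [sw, sw]
      refine Finset.sum_congr rfl fun i _ => ?_
      have := ih j (by omega) (fun t => w (t + 1)) (G.curryLeft (w 0 (c₁ c i))) (c₂ c i)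
      simp only [MultilinearMap.curryLeft_apply] at this
      convert this using 3 with g g
      · congr 1; ext t
        refine Fin.cases ?_ (fun t => ?_) t <;> simp [mrg]
      · congr 1; ext t
        refine Fin.cases ?_ (fun t => ?_) t <;> simp [mrg]

end coalg
end HochAux

open TensorProduct
noncomputable section HochAux2
open WithConv

section hoch
variable {k A E Q : Type*} [CommRing k] [Ring A] [Algebra k A] [Ring E] [Algebra k E]
  [AddCommGroup Q] [Module k Q]

/-- `(e_0,…,e_{r+1}) ↦ e_{r+1} x e_0 ⊗ p e_1 ⊗ ⋯ ⊗ p e_r`. -/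
def G0 (p : E →ₗ[k] Q) (r : ℕ) (x : E) :
    MultilinearMap k (fun _ : Fin (r + 1 + 1) => E) (E ⊗[k] (⨂[k]^r Q)) :=
  MultilinearMap.mk' (fun e => (e (Fin.last (r + 1)) * x * e 0) ⊗ₜ[k]
      (PiTensorProduct.tprod k fun i : Fin r => p (e i.succ.castSucc)))
    (by
      intro e i a b
      have key : ∀ (i : Fin r) (a : E) , (fun t : Fin r => p (Function.update e i.succ.castSucc a t.succ.castSucc)) = Function.update (fun t : Fin r => p (e t.succ.castSucc)) i (p a) := by
        intro i a
        ext t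
        by_cases h : t = i
        · subst h; simp
        · rw [Function.update_of_ne h, Function.update_of_ne]
          simpa using h
      induction i using Fin.lastCases with
      | last =>
        have h0 : (0 : Fin (r + 1 + 1)) ≠ Fin.last (r + 1) := by simp [Fin.ext_iff]
        have h1 : ∀ t : Fin r, t.succ.castSucc ≠ Fin.last (r + 1) := by
          intro t; simp [Fin.ext_iff]; omega
        simp [h1, add_mul, TensorProduct.add_tmul, Function.update_of_ne h0]
      | cast i =>
        induction i using Fin.cases with
        | zero =>
          have h0 : Fin.last (r + 1) ≠ 0 := by simp [Fin.ext_iff]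
          have h1 : ∀ t : Fin r, t.succ.castSucc ≠ 0 := by
            intro t; simp [Fin.ext_iff]
          simp [h1, mul_add, TensorProduct.add_tmul, Function.update_of_ne h0]
        | succ i =>
          have h0 : (0 : Fin (r + 1 + 1)) ≠ i.succ.castSucc := by simp [Fin.ext_iff]
          have h1 : Fin.last (r + 1) ≠ i.succ.castSucc := by
            simp [Fin.ext_iff]; omega
          simp only [key, Function.update_of_ne h0, Function.update_of_ne h1, map_add,
            MultilinearMap.map_update_add, TensorProduct.tmul_add])
    (by
      intro e i a b
      have key : ∀ (i : Fin r) (a : E) , (fun t : Fin r => p (Function.update e i.succ.castSucc a t.succ.castSucc)) = Function.update (fun t : Fin r => p (e t.succ.castSucc)) i (p a) := by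
        intro i a
        ext t
        by_cases h : t = i
        · subst h; simp
        · rw [Function.update_of_ne h, Function.update_of_ne]
          simpa using h
      induction i using Fin.lastCases with
      | last =>
        have h0 : (0 : Fin (r + 1 + 1)) ≠ Fin.last (r + 1) := by simp [Fin.ext_iff]
        have h1 : ∀ t : Fin r, t.succ.castSucc ≠ Fin.last (r + 1) := by
          intro t; simp [Fin.ext_iff]; omega
        simp [h1, TensorProduct.smul_tmul', Function.update_of_ne h0]
      | cast i =>
        induction i using Fin.cases with
        | zero =>
          have h0 : Fin.last (r + 1) ≠ 0 := by simp [Fin.ext_iff]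
          have h1 : ∀ t : Fin r, t.succ.castSucc ≠ 0 := by
            intro t; simp [Fin.ext_iff]
          simp [h1, TensorProduct.smul_tmul', Function.update_of_ne h0]
        | succ i =>
          have h0 : (0 : Fin (r + 1 + 1)) ≠ i.succ.castSucc := by simp [Fin.ext_iff]
          have h1 : Fin.last (r + 1) ≠ i.succ.castSucc := by
            simp [Fin.ext_iff]; omega
          simp only [key, Function.update_of_ne h0, Function.update_of_ne h1, map_smul,
            MultilinearMap.map_update_smul, TensorProduct.tmul_smul])

theorem G0_apply (p : E →ₗ[k] Q) (r : ℕ) (x : E) (e : Fin (r + 1 + 1) → E) :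
    G0 p r x e = (e (Fin.last (r + 1)) * x * e 0) ⊗ₜ[k]
      (PiTensorProduct.tprod k fun i : Fin r => p (e i.succ.castSucc)) := rfl

theorem G0_nat (p : E →ₗ[k] Q) (r : ℕ) (x : E) (e : ℕ → E) :
    G0 p r x (fun i => e i) = (e (r + 1) * x * e 0) ⊗ₜ[k]
      (PiTensorProduct.tprod k fun i : Fin r => p (e (i + 1))) := by
  rw [G0_apply]
  simp

/-- Descending a multilinear function to the normalized tensor product. -/
theorem exists_descend {M : Type*} [AddCommGroup M] [Module k M] (r : ℕ)
    (Φ : E → (Fin r → A) → M)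
    (hx : ∀ x y a, Φ (x + y) a = Φ x a + Φ y a)
    (hxs : ∀ (t : k) x a, Φ (t • x) a = t • Φ x a)
    (ha : ∀ x a i y z, Φ x (Function.update a i (y + z)) =
      Φ x (Function.update a i y) + Φ x (Function.update a i z))
    (has : ∀ x a i (t : k) y, Φ x (Function.update a i (t • y)) = t • Φ x (Function.update a i y))
    (h1 : ∀ x a i, a i = 1 → Φ x a = 0) :
    ∃ s : E ⊗[k] (⨂[k]^r (A ⧸ (Submodule.span k {(1 : A)}))) →ₗ[k] M, ∀ x a,
      s (x ⊗ₜ[k] PiTensorProduct.tprod k fun i : Fin r =>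
        (Submodule.span k {(1 : A)}).mkQ (a i)) = Φ x a := by
  classical
  set N := Submodule.span k {(1 : A)} with hN
  have step : ∀ x a i y, N.mkQ y = N.mkQ (a i) → Φ x (Function.update a i y) = Φ x a := by
    intro x a i y hy
    have : y - a i ∈ N := by
      rw [← Submodule.Quotient.eq]; exact hy
    obtain ⟨t, ht⟩ := Submodule.mem_span_singleton.1 this
    have hy' : y = a i + t • 1 := by rw [ht]; abel
    rw [hy', ha, has, h1 x (Function.update a i 1) i (by simp)]
    simp
  have wd : ∀ x (a b : Fin r → A), (∀ i, N.mkQ (a i) = N.mkQ (b i)) → Φ x a = Φ x b := by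
    intro x a b hab
    have : ∀ s : Finset (Fin r), Φ x (s.piecewise a b) = Φ x b := by
      intro s
      induction s using Finset.induction_on with
      | empty => simp
      | insert i s hi ih =>
        rw [Finset.piecewise_insert, step, ih]
        rw [hab i, Finset.piecewise_eq_of_notMem _ _ _ hi]
    simpa using this Finset.univ
  choose o ho using N.mkQ_surjective
  have upd : ∀ (ab : Fin r → A ⧸ N) i y, ∀ t, N.mkQ (o (Function.update ab i (N.mkQ y) t)) =
      N.mkQ (Function.update (fun t => o (ab t)) i y t) := by
    intro ab i y t
    rw [ho]
    by_cases h : t = i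
    · subst h; simp
    · simp only [Function.update_of_ne h, ho]
  let D : E → MultilinearMap k (fun _ : Fin r => A ⧸ N) M := fun x =>
    MultilinearMap.mk' (fun ab => Φ x (fun t => o (ab t)))
      (by
        intro ab i y z
        obtain ⟨y, rfl⟩ := N.mkQ_surjective y
        obtain ⟨z, rfl⟩ := N.mkQ_surjective z
        rw [← map_add, wd x _ _ (upd ab i _), wd x _ _ (upd ab i _), wd x _ _ (upd ab i _), ha])
      (by
        intro ab i t y
        obtain ⟨y, rfl⟩ := N.mkQ_surjective y
        rw [← map_smul, wd x _ _ (upd ab i _), wd x _ _ (upd ab i _), has])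
  refine ⟨TensorProduct.lift
    { toFun := fun x => PiTensorProduct.lift (D x)
      map_add' := fun x y => by
        rw [← map_add]; congr 1; ext ab; exact hx _ _ _
      map_smul' := fun t x => by
        rw [RingHom.id_apply, ← map_smul]; congr 1; ext ab; exact hxs _ _ _ }, ?_⟩
  intro x a
  simp only [TensorProduct.lift.tmul, LinearMap.coe_mk, AddHom.coe_mk, PiTensorProduct.lift.tprod]
  exact wd x _ _ (fun i => ho _)

theorem hoch_ext {M : Type*} [AddCommGroup M] [Module k M] (r : ℕ)
    (f g : E ⊗[k] (⨂[k]^r (A ⧸ (Submodule.span k {(1 : A)}))) →ₗ[k] M)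
    (h : ∀ x (a : Fin r → A), f (x ⊗ₜ[k] PiTensorProduct.tprod k fun i : Fin r =>
        (Submodule.span k {(1 : A)}).mkQ (a i)) = g (x ⊗ₜ[k] PiTensorProduct.tprod k
          fun i : Fin r => (Submodule.span k {(1 : A)}).mkQ (a i))) : f = g := by
  apply TensorProduct.ext
  ext x ab
  choose o ho using (Submodule.span k {(1 : A)}).mkQ_surjective
  have := h x (fun i => o (ab i))
  simp only [ho] at this
  exact this

theorem sum_lemma {M : Type*} [AddCommGroup M] (D : ℕ → ℕ → M) (N : ℕ) :
    (∑ i ∈ Finset.range (N + 1), ∑ j ∈ Finset.range (N + 2), (-1 : ℤ) ^ (i + j) • D i j) +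
    (∑ i ∈ Finset.range N, ∑ j ∈ Finset.range (N + 1),
      (-1 : ℤ) ^ (i + j) • (if j ≤ i then D (i + 1) j else D i (j + 1))) =
    ∑ i ∈ Finset.range (N + 1), (D i i - D i (i + 1)) := by
  induction N with
  | zero => simp [Finset.sum_range_succ]; abel
  | succ N ih =>
    rw [Finset.sum_range_succ (fun i => D i i - D i (i + 1)) (N + 1), ← ih]
    rw [Finset.sum_range_succ _ (N + 1), Finset.sum_range_succ (fun i => ∑ j ∈ Finset.range (N + 1 + 1),
      (-1 : ℤ) ^ (i + j) • (if j ≤ i then D (i + 1) j else D i (j + 1))) N]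
    simp only [Finset.sum_range_succ _ (N + 2), Finset.sum_range_succ _ (N + 1),
      Finset.sum_add_distrib]
    have e1 : ∑ x ∈ Finset.range (N + 1), (-1 : ℤ) ^ (N + x) •
        (if x ≤ N then D (N + 1) x else D N (x + 1)) =
        - ∑ x ∈ Finset.range (N + 1), (-1 : ℤ) ^ (N + 1 + x) • D (N + 1) x := by
      rw [← Finset.sum_neg_distrib]
      refine Finset.sum_congr rfl fun x hx => ?_
      rw [if_pos (by simp at hx; omega), show N + 1 + x = N + x + 1 by ring, pow_succ]
      simp
    have e2 : ∑ x ∈ Finset.range N, (-1 : ℤ) ^ (x + (N + 1)) •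
        (if N + 1 ≤ x then D (x + 1) (N + 1) else D x (N + 1 + 1)) =
        - ∑ x ∈ Finset.range N, (-1 : ℤ) ^ (x + (N + 2)) • D x (N + 2) := by
      rw [← Finset.sum_neg_distrib]
      refine Finset.sum_congr rfl fun x hx => ?_
      rw [if_neg (by simp at hx; omega), show x + (N + 2) = x + (N + 1) + 1 by ring, pow_succ]
      simp
    rw [e1, e2]
    simp only [Finset.sum_range_succ _ N]
    have h1 : (-1 : ℤ) ^ (N + (N + 1)) = -1 := by rw [show N + (N + 1) = 2 * N + 1 by ring]; simp [pow_succ]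
    have h2 : (-1 : ℤ) ^ (N + (N + 2)) = 1 := by rw [show N + (N + 2) = 2 * (N + 1) by ring]; simp
    have h3 : (-1 : ℤ) ^ (N + 1 + (N + 1)) = 1 := by rw [show N + 1 + (N + 1) = 2 * (N + 1) by ring]; simp
    have h4 : (-1 : ℤ) ^ (N + 1 + (N + 2)) = -1 := by rw [show N + 1 + (N + 2) = 2 * (N + 1) + 1 by ring]; simp [pow_succ]
    rw [h1, h2, h3, h4, if_neg (by omega)]
    simp only [one_smul, neg_smul]
    abel
end hoch
end HochAux2

open TensorProduct
noncomputable section HochAux3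
open WithConv

section words
variable {k A E C : Type*} [CommRing k] [Ring A] [Algebra k A] [Ring E] [Algebra k E]
  [AddCommGroup C] [Module k C] [Coalgebra k C]

/-- The constant convolution element `c ↦ ε(c) e`. -/
def cst (k C : Type*) {E : Type*} [CommRing k] [Ring E] [Algebra k E]
    [AddCommGroup C] [Module k C] [Coalgebra k C] (e : E) : WithConv (C →ₗ[k] E) :=
  toConv (LinearMap.toSpanSingleton k E e ∘ₗ Coalgebra.counit)

theorem cst_mul_apply (e : E) (u : WithConv (C →ₗ[k] E)) (c : C) :
    (cst k C e * u) c = e * u c := by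
  rw [(Coalgebra.Repr.arbitrary k c).convMul_apply]
  conv_rhs => rw [← Coalgebra.sum_counit_smul (R := k) (Coalgebra.Repr.arbitrary k c)]
  simp [cst, map_sum, Finset.mul_sum]

theorem mul_cst_apply (e : E) (u : WithConv (C →ₗ[k] E)) (c : C) :
    (u * cst k C e) c = u c * e := by
  have h := Coalgebra.sum_tmul_counit_eq (R := k) (Coalgebra.Repr.arbitrary k c)
  rw [(Coalgebra.Repr.arbitrary k c).convMul_apply]
  have h2 := congrArg (fun t => LinearMap.mul' k E (TensorProduct.map u.ofConv
    (LinearMap.toSpanSingleton k E e) t)) h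
  simp only [map_sum, TensorProduct.map_tmul, LinearMap.mul'_apply] at h2
  simpa [cst] using h2

/-- Compose with the inclusion. -/
def iA (ι : A →ₐ[k] E) (g : C →ₗ[k] A) : WithConv (C →ₗ[k] E) :=
  toConv (ι.toLinearMap ∘ₗ g)

@[simp] theorem iA_apply (ι : A →ₐ[k] E) (g : C →ₗ[k] A) (c : C) : iA ι g c = ι (g c) := rfl

/-- Slot map. -/
def qq (p : E →ₗ[k] A) : E →ₗ[k] (A ⧸ (Submodule.span k {(1 : A)})) :=
  (Submodule.span k {(1 : A)}).mkQ ∘ₗ p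

variable (n : C → ℕ) (c₁ c₂ : C → ℕ → C) (p : E →ₗ[k] A)

/-- Evaluate a word. -/
def Qf (r : ℕ) (x : E) (w : ℕ → WithConv (C →ₗ[k] E)) (c : C) :
    E ⊗[k] (⨂[k]^r (A ⧸ (Submodule.span k {(1 : A)}))) :=
  sw n c₁ c₂ (r + 1) c (fun v => G0 (qq p) r x (fun i => w i (v i)))

theorem Qf_congr (r : ℕ) (x : E) (w w' : ℕ → WithConv (C →ₗ[k] E)) (c : C)
    (h : ∀ i ≤ r + 1, w i = w' i) : Qf n c₁ c₂ p r x w c = Qf n c₁ c₂ p r x w' c := by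
  unfold Qf
  congr 1; ext v; congr 1; ext i
  rw [h i (by omega)]

theorem Qf_cst_left (r : ℕ) (x e : E) (w w' : ℕ → WithConv (C →ₗ[k] E)) (c : C)
    (h0 : w 0 = cst k C e * w' 0)
    (h : ∀ i, i ≠ 0 → i ≤ r + 1 → w i = w' i) :
    Qf n c₁ c₂ p r x w c = Qf n c₁ c₂ p r (x * e) w' c := by
  unfold Qf
  congr 1; ext v
  rw [G0_nat (qq p) r x (fun i => w i (v i)), G0_nat (qq p) r _ (fun i => w' i (v i))]
  rw [h0, cst_mul_apply, h (r + 1) (by omega) (by omega)]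
  simp only [mul_assoc]
  congr 2; ext i
  rw [h (i + 1) (by omega) (by omega)]

theorem Qf_cst_right (r : ℕ) (x e : E) (w w' : ℕ → WithConv (C →ₗ[k] E)) (c : C)
    (h0 : w (r + 1) = w' (r + 1) * cst k C e)
    (h : ∀ i, i ≤ r → w i = w' i) :
    Qf n c₁ c₂ p r x w c = Qf n c₁ c₂ p r (e * x) w' c := by
  unfold Qf
  congr 1; ext v
  rw [G0_nat (qq p) r x (fun i => w i (v i)), G0_nat (qq p) r _ (fun i => w' i (v i))]
  rw [h0, mul_cst_apply, h 0 (by omega)]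
  simp only [mul_assoc]
  congr 2; ext i
  rw [h (i + 1) (by omega)]

theorem Qf_add_x (r : ℕ) (x y : E) (w : ℕ → WithConv (C →ₗ[k] E)) (c : C) :
    Qf n c₁ c₂ p r (x + y) w c = Qf n c₁ c₂ p r x w c + Qf n c₁ c₂ p r y w c := by
  unfold Qf
  rw [← sw_add]
  congr 1; ext v
  simp only [G0_apply, mul_add, add_mul, TensorProduct.add_tmul]

theorem Qf_smul_x (r : ℕ) (t : k) (x : E) (w : ℕ → WithConv (C →ₗ[k] E)) (c : C) :
    Qf n c₁ c₂ p r (t • x) w c = t • Qf n c₁ c₂ p r x w c := by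
  unfold Qf
  rw [← sw_smul]
  congr 1; ext v
  simp only [G0_apply, mul_smul_comm, smul_mul_assoc, TensorProduct.smul_tmul']

theorem word_update (m N : ℕ) (hm : m < N) (w : ℕ → WithConv (C →ₗ[k] E))
    (u : WithConv (C →ₗ[k] E)) (v : ℕ → C) :
    (fun i : Fin N => (Function.update w m u i) (v i)) =
      Function.update (fun i : Fin N => w i (v i)) ⟨m, hm⟩ (u (v m)) := by
  ext i
  by_cases h : i = ⟨m, hm⟩
  · subst h; simp
  · have h' : (i : ℕ) ≠ m := fun e => h (Fin.ext e)
    simp [Function.update_of_ne h, Function.update_of_ne h']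

theorem Qf_update_add (r : ℕ) (x : E) (m : ℕ) (hm : m ≤ r + 1) (w : ℕ → WithConv (C →ₗ[k] E))
    (u u' : WithConv (C →ₗ[k] E)) (c : C) :
    Qf n c₁ c₂ p r x (Function.update w m (u + u')) c =
      Qf n c₁ c₂ p r x (Function.update w m u) c + Qf n c₁ c₂ p r x (Function.update w m u') c := by
  unfold Qf
  rw [← sw_add]
  congr 1; ext v
  rw [word_update m (r + 1 + 1) (by omega), word_update m (r + 1 + 1) (by omega),
    word_update m (r + 1 + 1) (by omega)]
  rw [show (u + u') (v m) = u (v m) + u' (v m) from rfl, MultilinearMap.map_update_add]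

theorem Qf_update_smul (r : ℕ) (x : E) (m : ℕ) (hm : m ≤ r + 1) (w : ℕ → WithConv (C →ₗ[k] E))
    (t : k) (u : WithConv (C →ₗ[k] E)) (c : C) :
    Qf n c₁ c₂ p r x (Function.update w m (t • u)) c =
      t • Qf n c₁ c₂ p r x (Function.update w m u) c := by
  unfold Qf
  rw [← sw_smul]
  congr 1; ext v
  rw [word_update m (r + 1 + 1) (by omega), word_update m (r + 1 + 1) (by omega)]
  rw [show (t • u) (v m) = t • u (v m) from rfl, MultilinearMap.map_update_smul]

theorem Qf_zero (r : ℕ) (x : E) (m : ℕ) (hm : m < r) (w : ℕ → WithConv (C →ₗ[k] E)) (c : C)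
    (h : ∀ c, qq p (w (m + 1) c) = 0) : Qf n c₁ c₂ p r x w c = 0 := by
  unfold Qf
  rw [← sw_zero n c₁ c₂ (r + 1) c]
  congr 1; ext v
  rw [G0_nat (qq p) r x (fun i => w i (v i))]
  rw [(PiTensorProduct.tprod k).map_coord_zero ⟨m, hm⟩ (h _), TensorProduct.tmul_zero]

/-- coefficient part of faces. -/
def fX (ι : A →ₐ[k] E) (r : ℕ) (x : E) (a : ℕ → A) (j : ℕ) : E :=
  if j = 0 then x * ι (a 0) else if j = r + 1 then ι (a r) * x else x

/-- tensor part of faces. -/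
def fA {A : Type*} [Ring A] (r : ℕ) (a : ℕ → A) (j : ℕ) : ℕ → A :=
  if j = 0 then (fun i => a (i + 1)) else if j = r + 1 then a else mrg (j - 1) a

/-- generators -/
def gen {A : Type*} [Ring A] [Algebra k A] (r : ℕ) (x : E) (a : ℕ → A) :
    E ⊗[k] (⨂[k]^r (A ⧸ (Submodule.span k {(1 : A)}))) :=
  x ⊗ₜ[k] PiTensorProduct.tprod k fun i : Fin r => (Submodule.span k {(1 : A)}).mkQ (a i)

theorem G0_gen (r : ℕ) (x : E) (e : ℕ → E) :
    G0 (qq p) r x (fun i => e i) = gen r (e (r + 1) * x * e 0) (fun i => p (e (i + 1))) := by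
  rw [G0_nat]; rfl

theorem gen_congr (r : ℕ) (x : E) (a b : ℕ → A) (h : ∀ i < r, a i = b i) :
    gen (k := k) r x a = gen r x b := by
  unfold gen; congr 2; ext i; rw [h i i.2]

variable {n c₁ c₂} {p} (hrep : IsRep k n c₁ c₂) {ι : A →ₐ[k] E} (hp : ∀ a, p (ι a) = a)
  (bd : ∀ r : ℕ, E ⊗[k] (⨂[k]^(r+1) (A ⧸ (Submodule.span k {(1 : A)}))) →ₗ[k]
    E ⊗[k] (⨂[k]^r (A ⧸ (Submodule.span k {(1 : A)}))))
  (hbd : ∀ r x (a : ℕ → A), bd r (gen (r + 1) x a) =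
    ∑ j ∈ Finset.range (r + 2), (-1 : ℤ) ^ j • gen r (fX ι r x a j) (fA r a j))

include hp hbd in
theorem bd_G0 (r : ℕ) (x : E) (e : ℕ → E) (he : ∀ i ≤ r, e (i + 1) = ι (p (e (i + 1)))) :
    bd r (G0 (qq p) (r + 1) x (fun i => e i)) =
      ∑ j ∈ Finset.range (r + 2), (-1 : ℤ) ^ j • G0 (qq p) r x (fun i => mrg j e i) := by
  rw [G0_gen, hbd]
  refine Finset.sum_congr rfl fun j hj => ?_
  have hj' : j < r + 2 := Finset.mem_range.1 hj
  rw [G0_gen]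
  congr 1
  rcases Nat.eq_zero_or_pos j with rfl | hj0
  · simp [fX, fA, mrg, ← he 0, mul_assoc]
  rcases Nat.lt_or_ge j (r + 1) with h | h
  · have e1 : fX ι r (e (r + 1 + 1) * x * e 0) (fun i => p (e (i + 1))) j
      = mrg j e (r + 1) * x * mrg j e 0 := by
      rw [fX, if_neg (by omega), if_neg (by omega), mrg, mrg, if_neg (by omega), if_neg (by omega),
        if_pos hj0]
    rw [e1]
    apply gen_congr
    intro i hi
    rw [fA, if_neg (by omega), if_neg (by omega)]
    simp only [mrg]
    obtain ⟨j, rfl⟩ : ∃ t, j = t + 1 := ⟨j - 1, by omega⟩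
    simp only [Nat.add_sub_cancel, Nat.add_lt_add_iff_right, Nat.add_right_cancel_iff]
    split_ifs
    · rfl
    · have h1 := hp (p (e (j + 1)) * p (e (j + 1 + 1)))
      rw [map_mul, ← he j (by omega), ← he (j + 1) (by omega)] at h1
      exact h1.symm
    · rfl
  · obtain rfl : j = r + 1 := by omega
    have e1 : fX ι r (e (r + 1 + 1) * x * e 0) (fun i => p (e (i + 1))) (r + 1)
      = mrg (r + 1) e (r + 1) * x * mrg (r + 1) e 0 := by
      simp [fX, mrg, ← he r, mul_assoc]
    rw [e1]
    apply gen_congr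
    intro i hi
    rw [fA, if_neg (by omega), if_pos rfl, mrg, if_pos (by omega)]

include hrep hp hbd in
theorem bd_Qf (r : ℕ) (x : E) (w : ℕ → WithConv (C →ₗ[k] E)) (c : C)
    (hw : ∀ i ≤ r, ∀ c, w (i + 1) c = ι (p (w (i + 1) c))) :
    bd r (Qf n c₁ c₂ p (r + 1) x w c) =
      ∑ j ∈ Finset.range (r + 2), (-1 : ℤ) ^ j • Qf n c₁ c₂ p r x (mrg j w) c := by
  rw [Qf, sw_map]
  have e : ∀ v : ℕ → C, _ := fun v => bd_G0 hp bd hbd r x (fun i => w i (v i))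
    (fun i hi => hw i hi _)
  simp only [e]
  rw [sw_sum]
  refine Finset.sum_congr rfl fun j hj => ?_
  rw [sw_smul, sw_mrg hrep (r + 1) j (by have := Finset.mem_range.1 hj; omega), Qf]

end words
end HochAux3

open TensorProduct
noncomputable section HochAux4
open WithConv

section homotopy
variable {k A E C : Type*} [CommRing k] [Ring A] [Algebra k A] [Ring E] [Algebra k E]
  [AddCommGroup C] [Module k C] [Coalgebra k C]

/-- Word with inverse `W0`, middle `iA (S a)`, last `W1`. -/
def Rw (ι : A →ₐ[k] E) (W0 W1 : WithConv (C →ₗ[k] E)) (S : A →ₗ[k] C →ₗ[k] A) (r : ℕ) (a : ℕ → A) :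
    ℕ → WithConv (C →ₗ[k] E) := fun m =>
  if m = 0 then W0 else if m = r + 1 then W1 else iA ι (S (a (m - 1)))

/-- Prism words. -/
def Pw (ι : A →ₐ[k] E) (Ui V : WithConv (C →ₗ[k] E)) (φ : C →ₗ[k] A) (S T : A →ₗ[k] C →ₗ[k] A)
    (r i : ℕ) (a : ℕ → A) : ℕ → WithConv (C →ₗ[k] E) := fun m =>
  if m = 0 then Ui else if m ≤ i then iA ι (T (a (m - 1))) else if m = i + 1 then iA ι φ
  else if m = r + 2 then V else iA ι (S (a (m - 2)))

variable {n : C → ℕ} {c₁ c₂ : C → ℕ → C} (hrep : IsRep k n c₁ c₂)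
  {p : E →ₗ[k] A} {ι : A →ₐ[k] E} (hp : ∀ a, p (ι a) = a)
  (bd : ∀ r : ℕ, E ⊗[k] (⨂[k]^(r+1) (A ⧸ (Submodule.span k {(1 : A)}))) →ₗ[k]
    E ⊗[k] (⨂[k]^r (A ⧸ (Submodule.span k {(1 : A)}))))
  (hbd : ∀ r x (a : ℕ → A), bd r (gen (r + 1) x a) =
    ∑ j ∈ Finset.range (r + 2), (-1 : ℤ) ^ j • gen r (fX ι r x a j) (fA r a j))
  {U Ui V Vi : WithConv (C →ₗ[k] E)} {φ : C →ₗ[k] A} {S T : A →ₗ[k] C →ₗ[k] A}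
  (h1 : Ui * iA ι φ = Vi) (h2 : iA ι φ * V = U) (h3 : ∀ a, iA ι (T a) * iA ι φ = iA ι φ * iA ι (S a))
  (h4 : ∀ a, Ui * iA ι (T a) = cst k C (ι a) * Ui) (h5 : ∀ a, iA ι (S a) * V = V * cst k C (ι a))
  (hS : ∀ a b, iA ι (S (a * b)) = iA ι (S a) * iA ι (S b))
  (hT : ∀ a b, iA ι (T (a * b)) = iA ι (T a) * iA ι (T b))
  (hS1 : ∀ c : C, S 1 c = Coalgebra.counit (R := k) c • (1 : A))
  (hT1 : ∀ c : C, T 1 c = Coalgebra.counit (R := k) c • (1 : A))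

include h1 in
theorem D_first (r : ℕ) (x : E) (a : ℕ → A) (c : C) :
    Qf n c₁ c₂ p r x (mrg 0 (Pw ι Ui V φ S T r 0 a)) c = Qf n c₁ c₂ p r x (Rw ι Vi V S r a) c := by
  apply Qf_congr
  intro m hm
  simp only [mrg, Pw, Rw]
  rcases m with _ | m
  · simpa using h1
  · simp

include h2 in
theorem D_last (r : ℕ) (x : E) (a : ℕ → A) (c : C) :
    Qf n c₁ c₂ p r x (mrg (r + 1) (Pw ι Ui V φ S T r r a)) c =
      Qf n c₁ c₂ p r x (Rw ι Ui U T r a) c := by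
  apply Qf_congr
  intro m hm
  rcases m with _ | m
  · simp [mrg, Pw, Rw]
  · rcases Nat.lt_or_ge m r with h | h
    · simp only [mrg, Pw, Rw]
      rw [if_pos (by omega), if_neg (by omega), if_pos (by omega), if_neg (by omega),
        if_neg (by omega)]
    · obtain rfl : m = r := by omega
      simpa [mrg, Pw, Rw] using h2

include h3 in
theorem D_mid (r i : ℕ) (hi : i < r) (x : E) (a : ℕ → A) (c : C) :
    Qf n c₁ c₂ p r x (mrg (i + 1) (Pw ι Ui V φ S T r (i + 1) a)) c =
      Qf n c₁ c₂ p r x (mrg (i + 1) (Pw ι Ui V φ S T r i a)) c := by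
  apply Qf_congr
  intro m hm
  simp only [mrg]
  split_ifs with hm1 hm2
  · simp only [Pw]
    split_ifs <;> first | omega | rfl
  · have e1 : Pw ι Ui V φ S T r (i + 1) a (i + 1) = iA ι (T (a i)) := by simp [Pw]
    have e2 : Pw ι Ui V φ S T r (i + 1) a (i + 1 + 1) = iA ι φ := by simp [Pw]
    have e3 : Pw ι Ui V φ S T r i a (i + 1) = iA ι φ := by simp [Pw]
    have e4 : Pw ι Ui V φ S T r i a (i + 1 + 1) = iA ι (S (a i)) := by
      simp [Pw]; omega
    rw [e1, e2, e3, e4, h3]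
  · simp only [Pw]
    split_ifs <;> first | omega | rfl

theorem Pw_zero (r i : ℕ) (a : ℕ → A) : Pw ι Ui V φ S T r i a 0 = Ui := rfl

theorem Pw_lo (r i m : ℕ) (h : m + 1 ≤ i) (a : ℕ → A) :
    Pw ι Ui V φ S T r i a (m + 1) = iA ι (T (a m)) := by
  simp only [Pw]
  rw [if_neg (by omega), if_pos h]
  rfl

theorem Pw_F (r i m : ℕ) (h : m = i + 1) (a : ℕ → A) :
    Pw ι Ui V φ S T r i a m = iA ι φ := by
  simp only [Pw]
  rw [if_neg (by omega), if_neg (by omega), if_pos h]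

theorem Pw_hi (r i m : ℕ) (h : i ≤ m) (h' : m ≠ r) (a : ℕ → A) :
    Pw ι Ui V φ S T r i a (m + 2) = iA ι (S (a m)) := by
  simp only [Pw]
  rw [if_neg (by omega), if_neg (by omega), if_neg (by omega), if_neg (by omega)]
  rfl

theorem Pw_V (r i m : ℕ) (h : i ≤ r) (hm : m = r + 2) (a : ℕ → A) :
    Pw ι Ui V φ S T r i a m = V := by
  simp only [Pw]
  rw [if_neg (by omega), if_neg (by omega), if_neg (by omega), if_pos hm]

theorem mrg_lt {X : Type*} [Mul X] (j m : ℕ) (h : m < j) (e : ℕ → X) : mrg j e m = e m := by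
  rw [mrg, if_pos h]

theorem mrg_eq {X : Type*} [Mul X] (j : ℕ) (e : ℕ → X) : mrg j e j = e j * e (j + 1) := by
  rw [mrg, if_neg (by omega), if_pos rfl]

theorem mrg_gt {X : Type*} [Mul X] (j m : ℕ) (h : j < m) (e : ℕ → X) : mrg j e m = e (m + 1) := by
  rw [mrg, if_neg (by omega), if_neg (by omega)]

/-- Comparison of the parts beyond the merged spot, for the first kind of faces. -/
theorem Pw_shift (r i j m : ℕ) (hi : i ≤ r) (hj : j ≤ i) (hjm : j ≤ m) (hm : m ≤ r + 1)
    (a b : ℕ → A) (hb : ∀ t, j ≤ t → b t = a (t + 1)) :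
    Pw ι Ui V φ S T (r + 1) (i + 1) a (m + 2) = Pw ι Ui V φ S T r i b (m + 1) := by
  rcases Nat.lt_or_ge m i with h | h
  · rw [Pw_lo _ _ (m + 1) (by omega), Pw_lo _ _ _ (by omega), hb m hjm]
  rcases Nat.eq_or_lt_of_le h with rfl | h
  · rw [Pw_F _ _ _ (by omega), Pw_F _ _ _ (by omega)]
  · obtain ⟨m, rfl⟩ : ∃ t, m = t + 1 := ⟨m - 1, by omega⟩
    rcases Nat.lt_or_ge m r with h' | h'
    · rw [Pw_hi _ _ (m + 1) (by omega) (by omega), Pw_hi _ _ m (by omega) (by omega),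
        hb m (by omega)]
    · rw [Pw_V _ _ _ (by omega) (by omega), Pw_V _ _ _ (by omega) (by omega)]

/-- Comparison of the parts before the merged spot. -/
theorem Pw_same (r r' i i' m : ℕ) (hm : m ≤ i) (hm' : m ≤ i')
    (a b : ℕ → A) (hb : ∀ t, t + 1 ≤ m → b t = a t) :
    Pw ι Ui V φ S T r i a m = Pw ι Ui V φ S T r' i' b m := by
  rcases m with _ | m
  · rfl
  · rw [Pw_lo _ _ _ hm, Pw_lo _ _ _ hm', hb m le_rfl]

include h4 hT in
theorem face_le (r i j : ℕ) (hi : i ≤ r) (hj : j ≤ i) (x : E) (a : ℕ → A) (c : C) :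
    Qf n c₁ c₂ p (r + 1) x (mrg j (Pw ι Ui V φ S T (r + 1) (i + 1) a)) c =
    Qf n c₁ c₂ p (r + 1) (fX ι r x a j) (Pw ι Ui V φ S T r i (fA r a j)) c := by
  rcases j with _ | j
  · rw [fX, if_pos rfl, fA, if_pos rfl]
    apply Qf_cst_left
    · rw [mrg_eq, Pw_zero, Pw_zero, Pw_lo _ _ _ (by omega), h4]
    · intro m hm0 hm
      obtain ⟨m, rfl⟩ : ∃ t, m = t + 1 := ⟨m - 1, by omega⟩
      rw [mrg_gt _ _ (by omega)]
      exact Pw_shift r i 0 m hi (by omega) (by omega) (by omega) _ _ (fun t _ => rfl)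
  · rw [fX, if_neg (by omega), if_neg (by omega), fA, if_neg (by omega), if_neg (by omega)]
    apply Qf_congr
    intro m hm
    rw [Nat.add_sub_cancel]
    rcases Nat.lt_trichotomy m (j + 1) with h | rfl | h
    · rw [mrg_lt _ _ h]
      exact Pw_same _ _ _ _ _ (by omega) (by omega) _ _ (fun t ht => mrg_lt _ _ (by omega) _)
    · rw [mrg_eq, Pw_lo _ _ _ (by omega), Pw_lo _ _ _ (by omega), ← hT, Pw_lo _ _ _ (by omega),
        mrg_eq]
    · rw [mrg_gt _ _ h]
      obtain ⟨m, rfl⟩ : ∃ t, m = t + 1 := ⟨m - 1, by omega⟩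
      exact Pw_shift r i (j + 1) m hi (by omega) (by omega) (by omega) _ _
        (fun t _ => mrg_gt _ _ (by omega) _)

/-- Comparison of the parts before the merged spot, second kind. -/
theorem Pw_same' (r i m : ℕ) (hi : i ≤ r) (hm : m ≤ r + 1)
    (a b : ℕ → A) (hb : ∀ t, t + 1 ≤ i ∨ t + 2 ≤ m → b t = a t) :
    Pw ι Ui V φ S T (r + 1) i a m = Pw ι Ui V φ S T r i b m := by
  rcases Nat.lt_or_ge i m with h | h
  · rcases Nat.eq_or_lt_of_le h with h | h
    · rw [Pw_F _ _ _ (by omega), Pw_F _ _ _ (by omega)]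
    · obtain ⟨m, rfl⟩ : ∃ t, m = t + 2 := ⟨m - 2, by omega⟩
      rw [Pw_hi _ _ _ (by omega) (by omega), Pw_hi _ _ _ (by omega) (by omega),
        hb m (Or.inr le_rfl)]
  · exact Pw_same _ _ _ _ _ h h _ _ (fun t ht => hb t (Or.inl (by omega)))

include h5 hS in
theorem face_gt (r i j : ℕ) (hi : i ≤ r) (hj : i < j) (hj' : j ≤ r + 1)
    (x : E) (a : ℕ → A) (c : C) :
    Qf n c₁ c₂ p (r + 1) x (mrg (j + 1) (Pw ι Ui V φ S T (r + 1) i a)) c =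
    Qf n c₁ c₂ p (r + 1) (fX ι r x a j) (Pw ι Ui V φ S T r i (fA r a j)) c := by
  obtain ⟨j, rfl⟩ : ∃ t, j = t + 1 := ⟨j - 1, by omega⟩
  rcases Nat.lt_or_ge j r with h | h
  · rw [fX, if_neg (by omega), if_neg (by omega), fA, if_neg (by omega), if_neg (by omega)]
    apply Qf_congr
    intro m hm
    rw [Nat.add_sub_cancel]
    rcases Nat.lt_trichotomy m (j + 2) with h1 | rfl | h1
    · rw [mrg_lt _ _ h1]
      exact Pw_same' _ _ _ hi (by omega) _ _ (fun t ht => mrg_lt _ _ (by omega) _)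
    · rw [mrg_eq, Pw_hi _ _ _ (by omega) (by omega), Pw_hi _ _ _ (by omega) (by omega), ← hS,
        Pw_hi _ _ _ (by omega) (by omega), mrg_eq]
    · rw [mrg_gt _ _ h1]
      obtain ⟨m, rfl⟩ : ∃ t, m = t + 2 := ⟨m - 2, by omega⟩
      rcases Nat.lt_or_ge m r with h' | h'
      · rw [Pw_hi _ _ (m + 1) (by omega) (by omega), Pw_hi _ _ m (by omega) (by omega),
          mrg_gt _ _ (by omega)]
      · rw [Pw_V _ _ _ (by omega) (by omega), Pw_V _ _ _ (by omega) (by omega)]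
  · obtain rfl : j = r := by omega
    rw [fX, if_neg (by omega), if_pos rfl, fA, if_neg (by omega), if_pos rfl]
    apply Qf_cst_right
    · rw [mrg_eq, Pw_hi _ _ _ (by omega) (by omega), Pw_V _ _ _ (by omega) (by omega), h5,
        Pw_V _ _ _ (by omega) (by omega)]
    · intro m hm
      rw [mrg_lt _ _ (by omega)]
      exact Pw_same' _ _ _ hi (by omega) _ _ (fun t ht => rfl)

theorem Pw_update (r i : ℕ) (a : ℕ → A) (t : ℕ) (y : A) (ht : t < r) :
    Pw ι Ui V φ S T r i (Function.update a t y) =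
      if t + 1 ≤ i then Function.update (Pw ι Ui V φ S T r i a) (t + 1) (iA ι (T y))
      else Function.update (Pw ι Ui V φ S T r i a) (t + 2) (iA ι (S y)) := by
  split_ifs with h
  · ext1 m
    by_cases hm : m = t + 1
    · subst hm; simp [Pw, h]
    · rw [Function.update_of_ne hm]
      simp only [Pw]
      split_ifs <;> first | rfl | (rw [Function.update_of_ne (by omega)])
  · ext1 m
    by_cases hm : m = t + 2
    · subst hm
      rw [Function.update_self]
      simp only [Pw]
      rw [if_neg (by omega), if_neg (by omega), if_neg (by omega), if_neg (by omega)]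
      simp
    · rw [Function.update_of_ne hm]
      simp only [Pw]
      split_ifs <;> first | rfl | (rw [Function.update_of_ne (by omega)])

theorem Pw_congr (r i : ℕ) (hi : i ≤ r) (a b : ℕ → A) (h : ∀ t < r, a t = b t) :
    ∀ m ≤ r + 2, Pw ι Ui V φ S T r i a m = Pw ι Ui V φ S T r i b m := by
  intro m hm
  simp only [Pw]
  split_ifs <;> first | rfl | (rw [h _ (by omega)])

/-- Extension of finite sequence. -/
def xtd {A : Type*} [Ring A] {r : ℕ} (a : Fin r → A) : ℕ → A :=
  fun i => if h : i < r then a ⟨i, h⟩ else 0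

theorem xtd_update {r : ℕ} (a : Fin r → A) (i : Fin r) (y : A) :
    xtd (Function.update a i y) = Function.update (xtd a) i y := by
  ext t
  by_cases h : t = i
  · subst h; simp [xtd]
  · rw [Function.update_of_ne h]
    simp only [xtd]
    split_ifs with h'
    · rw [Function.update_of_ne]
      intro e; apply h; rw [← e]
    · rfl

include hp hS1 hT1 in
theorem exists_s (r : ℕ) (c : C) :
    ∃ s : E ⊗[k] (⨂[k]^r (A ⧸ (Submodule.span k {(1 : A)}))) →ₗ[k]
      E ⊗[k] (⨂[k]^(r + 1) (A ⧸ (Submodule.span k {(1 : A)}))), ∀ x a,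
      s (gen r x a) = ∑ i ∈ Finset.range (r + 1),
        (-1 : ℤ) ^ i • Qf n c₁ c₂ p (r + 1) x (Pw ι Ui V φ S T r i a) c := by
  obtain ⟨s, hs⟩ := exists_descend (k := k) (A := A) (E := E) r
    (fun x a => ∑ i ∈ Finset.range (r + 1),
        (-1 : ℤ) ^ i • Qf n c₁ c₂ p (r + 1) x (Pw ι Ui V φ S T r i (xtd a)) c)
    (by
      intro x y a
      simp only [Qf_add_x, smul_add, Finset.sum_add_distrib])
    (by
      intro t x a
      simp only [Qf_smul_x, Finset.smul_sum]
      refine Finset.sum_congr rfl fun i _ => ?_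
      rw [smul_comm])
    (by
      intro x a t y z
      rw [← Finset.sum_add_distrib]
      refine Finset.sum_congr rfl fun i _ => ?_
      rw [← smul_add]
      congr 1
      simp only [xtd_update]
      rw [Pw_update _ _ _ _ _ t.2, Pw_update _ _ _ _ _ t.2, Pw_update _ _ _ _ _ t.2]
      split_ifs
      · rw [← Qf_update_add _ _ _ _ _ _ _ (by omega)]
        congr 2; ext; simp [iA]
      · rw [← Qf_update_add _ _ _ _ _ _ _ (by omega)]
        congr 2; ext; simp [iA])
    (by
      intro x a t u y
      simp only [Finset.smul_sum]
      refine Finset.sum_congr rfl fun i _ => ?_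
      rw [smul_comm u]
      congr 1
      simp only [xtd_update]
      rw [Pw_update _ _ _ _ _ t.2, Pw_update _ _ _ _ _ t.2]
      split_ifs
      · rw [← Qf_update_smul _ _ _ _ _ _ _ (by omega)]
        congr 2; ext; simp [iA]
      · rw [← Qf_update_smul _ _ _ _ _ _ _ (by omega)]
        congr 2; ext; simp [iA])
    (by
      intro x a t ht
      have e : Function.update a t 1 = a := by rw [← ht]; simp
      have z : (Submodule.span k {(1 : A)}).mkQ 1 = 0 := by
        simp
      refine Finset.sum_eq_zero fun i hi => ?_
      rw [← e, xtd_update, Pw_update _ _ _ _ _ t.2]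
      split_ifs with h
      · rw [Qf_zero _ _ _ _ _ _ t (by omega), smul_zero]
        intro c
        rw [Function.update_self, iA_apply, hT1, qq, LinearMap.comp_apply, hp, map_smul, z, smul_zero]
      · rw [Qf_zero _ _ _ _ _ _ (t + 1) (by omega), smul_zero]
        intro c
        rw [Function.update_self, iA_apply, hS1, qq, LinearMap.comp_apply, hp, map_smul, z, smul_zero])
  refine ⟨s, fun x a => ?_⟩
  have := hs x (fun i => a i)
  rw [gen, this]
  refine Finset.sum_congr rfl fun i hi => ?_
  congr 1
  apply Qf_congr
  apply Pw_congr
  · have := Finset.mem_range.1 hi; omega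
  · intro t ht; simp [xtd, ht]

theorem Pw_mid (hp : ∀ a, p (ι a) = a) (r i : ℕ) (hi : i ≤ r) (a : ℕ → A) : ∀ m ≤ r, ∀ c,
    Pw ι Ui V φ S T r i a (m + 1) c = ι (p (Pw ι Ui V φ S T r i a (m + 1) c)) := by
  intro m hm c
  rcases Nat.lt_or_ge m i with h | h
  · rw [Pw_lo _ _ _ h, iA_apply, hp]
  rcases Nat.eq_or_lt_of_le h with rfl | h
  · rw [Pw_F _ _ _ rfl, iA_apply, hp]
  · obtain ⟨m, rfl⟩ : ∃ t, m = t + 1 := ⟨m - 1, by omega⟩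
    rw [Pw_hi _ _ _ (by omega) (by omega), iA_apply, hp]

include hrep hp hbd h1 h2 h3 h4 h5 hS hT hS1 hT1 in
theorem homotopy (c : C) : 
    ∃ s : ∀ r : ℕ, E ⊗[k] (⨂[k]^r (A ⧸ (Submodule.span k {(1 : A)}))) →ₗ[k]
      E ⊗[k] (⨂[k]^(r + 1) (A ⧸ (Submodule.span k {(1 : A)}))),
      (∀ x (a : ℕ → A), bd 0 (s 0 (gen 0 x a)) =
        Qf n c₁ c₂ p 0 x (Rw ι Vi V S 0 a) c - Qf n c₁ c₂ p 0 x (Rw ι Ui U T 0 a) c) ∧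
      (∀ r x (a : ℕ → A), bd (r + 1) (s (r + 1) (gen (r + 1) x a)) + s r (bd r (gen (r + 1) x a)) =
        Qf n c₁ c₂ p (r + 1) x (Rw ι Vi V S (r + 1) a) c -
          Qf n c₁ c₂ p (r + 1) x (Rw ι Ui U T (r + 1) a) c) := by
  choose s hs using fun r => exists_s (n := n) (c₁ := c₁) (c₂ := c₂) (Ui := Ui) (V := V) (φ := φ)
    hp hS1 hT1 r c
  have b1 : ∀ r x (a : ℕ → A), bd r (s r (gen r x a)) =
      ∑ i ∈ Finset.range (r + 1), ∑ j ∈ Finset.range (r + 2),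
        (-1 : ℤ) ^ (i + j) • Qf n c₁ c₂ p r x (mrg j (Pw ι Ui V φ S T r i a)) c := by
    intro r x a
    rw [hs, map_sum]
    refine Finset.sum_congr rfl fun i hi => ?_
    rw [map_zsmul, bd_Qf hrep hp bd hbd r x _ c
      (Pw_mid hp r i (by have := Finset.mem_range.1 hi; omega) a), Finset.smul_sum]
    refine Finset.sum_congr rfl fun j _ => ?_
    rw [smul_smul, pow_add]
  have tele : ∀ r x (a : ℕ → A), ∑ i ∈ Finset.range (r + 1),
      (Qf n c₁ c₂ p r x (mrg i (Pw ι Ui V φ S T r i a)) c -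
        Qf n c₁ c₂ p r x (mrg (i + 1) (Pw ι Ui V φ S T r i a)) c) =
      Qf n c₁ c₂ p r x (Rw ι Vi V S r a) c - Qf n c₁ c₂ p r x (Rw ι Ui U T r a) c := by
    intro r x a
    rw [Finset.sum_sub_distrib, Finset.sum_range_succ', Finset.sum_range_succ, D_first h1,
      D_last h2]
    rw [Finset.sum_congr rfl fun i hi => D_mid h3 r i (Finset.mem_range.1 hi) x a c]
    abel
  refine ⟨s, fun x a => ?_, fun r x a => ?_⟩
  · rw [← tele, b1, ← sum_lemma (fun i j => Qf n c₁ c₂ p 0 x (mrg j (Pw ι Ui V φ S T 0 i a)) c) 0]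
    simp
  · rw [← tele, b1, ← sum_lemma
      (fun i j => Qf n c₁ c₂ p (r + 1) x (mrg j (Pw ι Ui V φ S T (r + 1) i a)) c) (r + 1)]
    congr 1
    rw [hbd, map_sum, Finset.sum_comm]
    refine Finset.sum_congr rfl fun j hj => ?_
    rw [map_zsmul, hs, Finset.smul_sum]
    refine Finset.sum_congr rfl fun i hi => ?_
    have hi' := Finset.mem_range.1 hi
    have hj' := Finset.mem_range.1 hj
    rw [smul_smul, add_comm i j, pow_add]
    congr 1
    split_ifs with h
    · rw [face_le h4 hT r i j (by omega) h]
    · rw [face_gt h5 hS r i j (by omega) (by omega) (by omega)]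

include hrep hp hbd h1 h2 h3 h4 h5 hS hT hS1 hT1 in
theorem homotopy_final (c : C) 
    (θ₁ θ₂ : ∀ r : ℕ, E ⊗[k] (⨂[k]^r (A ⧸ (Submodule.span k {(1 : A)}))) →ₗ[k]
      E ⊗[k] (⨂[k]^r (A ⧸ (Submodule.span k {(1 : A)}))))
    (hθ₁ : ∀ r x (a : ℕ → A), θ₁ r (gen r x a) = Qf n c₁ c₂ p r x (Rw ι Ui U T r a) c)
    (hθ₂ : ∀ r x (a : ℕ → A), θ₂ r (gen r x a) = Qf n c₁ c₂ p r x (Rw ι Vi V S r a) c) :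
    (∀ z, ∃ w, θ₁ 0 z - θ₂ 0 z = bd 0 w) ∧
    (∀ r z, bd r z = 0 → ∃ w, θ₁ (r + 1) z - θ₂ (r + 1) z = bd (r + 1) w) := by
  obtain ⟨s, s0, s1⟩ := homotopy hrep hp bd hbd h1 h2 h3 h4 h5 hS hT hS1 hT1 c
  have g : ∀ r (x : E) (a : Fin r → A), (x ⊗ₜ[k] PiTensorProduct.tprod k fun i : Fin r =>
      (Submodule.span k {(1 : A)}).mkQ (a i)) = gen r x (xtd a) := by
    intro r x a
    rw [gen]; congr 2; ext i; simp [xtd]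
  have e0 : bd 0 ∘ₗ s 0 = θ₂ 0 - θ₁ 0 := by
    apply hoch_ext
    intro x a
    rw [g, LinearMap.comp_apply, s0, LinearMap.sub_apply, hθ₁, hθ₂]
  have e1 : ∀ r, bd (r + 1) ∘ₗ s (r + 1) + s r ∘ₗ bd r = θ₂ (r + 1) - θ₁ (r + 1) := by
    intro r
    apply hoch_ext
    intro x a
    rw [g, LinearMap.add_apply, LinearMap.comp_apply, LinearMap.comp_apply, s1,
      LinearMap.sub_apply, hθ₁, hθ₂]
  refine ⟨fun z => ⟨- s 0 z, ?_⟩, fun r z hz => ⟨- s (r + 1) z, ?_⟩⟩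
  · have := LinearMap.congr_fun e0 z
    simp only [LinearMap.comp_apply, LinearMap.sub_apply] at this
    rw [map_neg, this, neg_sub]
  · have := LinearMap.congr_fun (e1 r) z
    simp only [LinearMap.comp_apply, LinearMap.sub_apply, LinearMap.add_apply, hz, map_zero,
      add_zero] at this
    rw [map_neg, this, neg_sub]

end homotopy
end HochAux4

open TensorProduct
noncomputable section HochAux5
open WithConv

section tools
variable {k C D B E M : Type*} [CommRing k] [AddCommGroup C] [Module k C] [Coalgebra k C]
  [AddCommGroup D] [Module k D] [Coalgebra k D] [AddCommGroup B] [Module k B] [Coalgebra k B]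
  [Ring E] [Algebra k E] [AddCommGroup M] [Module k M]
  {n : C → ℕ} {c₁ c₂ : C → ℕ → C} (hC : IsRep k n c₁ c₂)
  {n' : D → ℕ} {d₁ d₂ : D → ℕ → D} (hD : IsRep k n' d₁ d₂)

/-- Pull back a convolution element along a coalgebra map. -/
def pull (ψ : C →ₗc[k] D) (w : WithConv (D →ₗ[k] E)) : WithConv (C →ₗ[k] E) :=
  toConv (w.ofConv ∘ₗ ψ.toLinearMap)

@[simp] theorem pull_apply (ψ : C →ₗc[k] D) (w : WithConv (D →ₗ[k] E)) (c : C) :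
    pull ψ w c = w (ψ c) := rfl

theorem pull_mul (ψ : C →ₗc[k] D) (w w' : WithConv (D →ₗ[k] E)) :
    pull ψ (w * w') = pull ψ w * pull ψ w' := by
  apply WithConv.ofConv_injective
  exact LinearMap.convMul_comp_coalgHom_distrib w w' ψ

theorem pull_one (ψ : C →ₗc[k] D) : pull ψ (1 : WithConv (D →ₗ[k] E)) = 1 := by
  ext c
  simp [LinearMap.convOne_def, pull]

theorem pull_cst (ψ : C →ₗc[k] D) (e : E) : pull ψ (cst k D e) = cst k C e := by
  ext c
  simp [cst, pull]

theorem pull_pull (ψ : C →ₗc[k] D) (χ : B →ₗc[k] C) (w : WithConv (D →ₗ[k] E)) :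
    pull χ (pull ψ w) = pull (ψ.comp χ) w := rfl

include hC in
theorem counit_left (f : C →ₗ[k] M) (c : C) :
    ∑ i ∈ Finset.range (n c), Coalgebra.counit (R := k) (c₁ c i) • f (c₂ c i) = f c := by
  have h := congrArg (fun t => f (TensorProduct.lid k C t))
    (Coalgebra.rTensor_counit_comul (R := k) c)
  rw [hC c] at h
  simpa [map_sum] using h

include hC in
theorem counit_right (f : C →ₗ[k] M) (c : C) :
    ∑ i ∈ Finset.range (n c), Coalgebra.counit (R := k) (c₂ c i) • f (c₁ c i) = f c := by
  have h := congrArg (fun t => f (TensorProduct.rid k C t))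
    (Coalgebra.lTensor_counit_comul (R := k) c)
  rw [hC c] at h
  simpa [map_sum] using h

/-- First projection. -/
def pr1 (k C D : Type*) [CommRing k] [AddCommGroup C] [Module k C] [Coalgebra k C]
    [AddCommGroup D] [Module k D] [Coalgebra k D] : C ⊗[k] D →ₗc[k] C :=
  (Coalgebra.TensorProduct.rid k k C).toCoalgHom.comp
    (Coalgebra.TensorProduct.map (CoalgHom.id k C) (Coalgebra.counitCoalgHom k D))

/-- Second projection. -/
def pr2 (k C D : Type*) [CommRing k] [AddCommGroup C] [Module k C] [Coalgebra k C]
    [AddCommGroup D] [Module k D] [Coalgebra k D] : C ⊗[k] D →ₗc[k] D :=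
  (Coalgebra.TensorProduct.lid k D).toCoalgHom.comp
    (Coalgebra.TensorProduct.map (Coalgebra.counitCoalgHom k C) (CoalgHom.id k D))

@[simp] theorem pr1_tmul (c : C) (d : D) :
    pr1 k C D (c ⊗ₜ d) = Coalgebra.counit (R := k) d • c := rfl
@[simp] theorem pr2_tmul (c : C) (d : D) :
    pr2 k C D (c ⊗ₜ d) = Coalgebra.counit (R := k) c • d := rfl

include hC hD in
theorem comul_tmul_rep (c : C) (d : D) : Coalgebra.comul (R := k) (c ⊗ₜ[k] d) =
    ∑ i ∈ Finset.range (n c), ∑ j ∈ Finset.range (n' d),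
      (c₁ c i ⊗ₜ[k] d₁ d j) ⊗ₜ[k] (c₂ c i ⊗ₜ[k] d₂ d j) := by
  rw [TensorProduct.comul_tmul, hC c, hD d]
  simp only [TensorProduct.sum_tmul, TensorProduct.tmul_sum, map_sum,
    TensorProduct.AlgebraTensorModule.tensorTensorTensorComm_tmul]
  exact Finset.sum_comm

include hC hD in
theorem conv_tmul (F G : WithConv (C ⊗[k] D →ₗ[k] E)) (c : C) (d : D) :
    (F * G) (c ⊗ₜ d) = ∑ i ∈ Finset.range (n c), ∑ j ∈ Finset.range (n' d),
      F (c₁ c i ⊗ₜ d₁ d j) * G (c₂ c i ⊗ₜ d₂ d j) := by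
  rw [LinearMap.convMul_apply, comul_tmul_rep hC hD]
  simp only [map_sum, TensorProduct.map_tmul, LinearMap.mul'_apply]

include hC in
theorem pr1_mul (u : WithConv (C →ₗ[k] E)) (X : WithConv (C ⊗[k] D →ₗ[k] E)) (c : C) (d : D) :
    (pull (pr1 k C D) u * X) (c ⊗ₜ d) =
      ∑ i ∈ Finset.range (n c), u (c₁ c i) * X (c₂ c i ⊗ₜ d) := by
  obtain ⟨n', d₁, d₂, hD⟩ := exists_isRep k D
  rw [conv_tmul hC hD]
  refine Finset.sum_congr rfl fun i _ => ?_
  have := counit_left hD (LinearMap.mulLeft k (u (c₁ c i)) ∘ₗ X.ofConv ∘ₗ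
    TensorProduct.mk k C D (c₂ c i)) d
  simp only [LinearMap.comp_apply, LinearMap.mulLeft_apply, TensorProduct.mk_apply] at this
  refine Eq.trans ?_ this
  refine Finset.sum_congr rfl fun j _ => ?_
  rw [pull_apply, pr1_tmul, map_smul, smul_mul_assoc]

include hC in
theorem mul_pr1 (u : WithConv (C →ₗ[k] E)) (X : WithConv (C ⊗[k] D →ₗ[k] E)) (c : C) (d : D) :
    (X * pull (pr1 k C D) u) (c ⊗ₜ d) =
      ∑ i ∈ Finset.range (n c), X (c₁ c i ⊗ₜ d) * u (c₂ c i) := by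
  obtain ⟨n', d₁, d₂, hD⟩ := exists_isRep k D
  rw [conv_tmul hC hD]
  refine Finset.sum_congr rfl fun i _ => ?_
  have := counit_right hD (LinearMap.mulRight k (u (c₂ c i)) ∘ₗ X.ofConv ∘ₗ
    TensorProduct.mk k C D (c₁ c i)) d
  simp only [LinearMap.comp_apply, LinearMap.mulRight_apply, TensorProduct.mk_apply] at this
  refine Eq.trans ?_ this
  refine Finset.sum_congr rfl fun j _ => ?_
  rw [pull_apply, pr1_tmul, map_smul, mul_smul_comm]

include hD in
theorem mul_pr2 (u : WithConv (D →ₗ[k] E)) (X : WithConv (C ⊗[k] D →ₗ[k] E)) (c : C) (d : D) :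
    (X * pull (pr2 k C D) u) (c ⊗ₜ d) =
      ∑ j ∈ Finset.range (n' d), X (c ⊗ₜ d₁ d j) * u (d₂ d j) := by
  obtain ⟨n, c₁, c₂, hC⟩ := exists_isRep k C
  rw [conv_tmul hC hD, Finset.sum_comm]
  refine Finset.sum_congr rfl fun j _ => ?_
  have := counit_right hC (LinearMap.mulRight k (u (d₂ d j)) ∘ₗ X.ofConv ∘ₗ
    (TensorProduct.mk k C D).flip (d₁ d j)) c
  simp only [LinearMap.comp_apply, LinearMap.mulRight_apply, TensorProduct.mk_apply,
    LinearMap.flip_apply] at this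
  refine Eq.trans ?_ this
  refine Finset.sum_congr rfl fun i _ => ?_
  rw [pull_apply, pr2_tmul, map_smul, mul_smul_comm]

theorem pr1_pr2 (u : WithConv (C →ₗ[k] E)) (v : WithConv (D →ₗ[k] E)) (c : C) (d : D) :
    (pull (pr1 k C D) u * pull (pr2 k C D) v) (c ⊗ₜ d) = u c * v d := by
  obtain ⟨n', d₁, d₂, hD⟩ := exists_isRep k D
  rw [mul_pr2 hD]
  have := counit_left hD (LinearMap.mulLeft k (u c) ∘ₗ v.ofConv) d
  simp only [LinearMap.comp_apply, LinearMap.mulLeft_apply] at this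
  refine Eq.trans ?_ this
  refine Finset.sum_congr rfl fun j _ => ?_
  rw [pull_apply, pr1_tmul, map_smul, smul_mul_assoc]

theorem pr2_pr1 (u : WithConv (C →ₗ[k] E)) (v : WithConv (D →ₗ[k] E)) (c : C) (d : D) :
    (pull (pr2 k C D) v * pull (pr1 k C D) u) (c ⊗ₜ d) = v d * u c := by
  obtain ⟨n, c₁, c₂, hC⟩ := exists_isRep k C
  rw [mul_pr1 hC]
  have := counit_left hC (LinearMap.mulLeft k (v d) ∘ₗ u.ofConv) c
  simp only [LinearMap.comp_apply, LinearMap.mulLeft_apply] at this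
  refine Eq.trans ?_ this
  refine Finset.sum_congr rfl fun j _ => ?_
  rw [pull_apply, pr2_tmul, map_smul, smul_mul_assoc]

/-- Naturality of iterated Sweedler sums. -/
theorem cvl_pull (ψ : C →ₗc[k] D) (m : ℕ) (w : ℕ → D →ₗ[k] E)
    (G : MultilinearMap k (fun _ : Fin (m + 1) => E) M) (c : C) :
    cvl m w G (ψ c) = cvl m (fun i => w i ∘ₗ ψ.toLinearMap) G c := by
  induction m generalizing w c with
  | zero => rfl
  | succ m ih =>
    obtain ⟨n, c₁, c₂, hC⟩ := exists_isRep k C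
    rw [cvl_succ hC]
    simp only [cvl, LinearMap.coe_mk, AddHom.coe_mk, LinearMap.comp_apply]
    have h : Coalgebra.comul (R := k) (ψ c) = TensorProduct.map ψ.toLinearMap ψ.toLinearMap
      (Coalgebra.comul (R := k) c) := (CoalgHomClass.map_comp_comul_apply ψ c).symm
    rw [h, hC c]
    simp only [map_sum, TensorProduct.map_tmul, TensorProduct.lift.tmul, LinearMap.comp_apply]
    refine Finset.sum_congr rfl fun i _ => ?_
    exact ih _ _ _

include hC hD in
theorem sw_sw (m : ℕ) (w : ℕ → C ⊗[k] D →ₗ[k] E)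
    (G : MultilinearMap k (fun _ : Fin (m + 1) => E) M) (c : C) (d : D) :
    sw n' d₁ d₂ m d (fun v => sw n c₁ c₂ m c (fun v' => G (fun i => w i (v' i ⊗ₜ v i)))) =
      cvl m w G (c ⊗ₜ d) := by
  induction m generalizing w c d with
  | zero =>
    simp only [sw, cvl, LinearMap.coe_mk, AddHom.coe_mk, LinearMap.comp_apply]
    rw [oneSlot_apply]
    congr 1; ext i
    obtain rfl : i = 0 := Fin.ext (by omega)
    simp
  | succ m ih =>
    simp only [cvl, LinearMap.coe_mk, AddHom.coe_mk, LinearMap.comp_apply]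
    rw [comul_tmul_rep hC hD]
    simp only [map_sum, TensorProduct.lift.tmul, LinearMap.comp_apply]
    rw [Finset.sum_comm]
    simp only [sw, sw_sum]
    refine Finset.sum_congr rfl fun j _ => Finset.sum_congr rfl fun i _ => ?_
    rw [← ih]
    congr 1; ext v; congr 1; ext v'
    rw [MultilinearMap.curryLeft_apply]
    congr 1
    ext t
    refine Fin.cases ?_ (fun t => ?_) t <;> simp

end tools

section antipode
variable {k H M : Type*} [CommRing k] [Ring H] [HopfAlgebra k H] [AddCommGroup M] [Module k M]
  {n : H → ℕ} {c₁ c₂ : H → ℕ → H} (hrep : IsRep k n c₁ c₂)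

/-- Four-fold coassociativity. -/
theorem coassoc4 {C : Type*} [AddCommGroup C] [Module k C] [Coalgebra k C]
    {n : C → ℕ} {c₁ c₂ : C → ℕ → C} (hrep : IsRep k n c₁ c₂)
    (B : C →ₗ[k] C →ₗ[k] C →ₗ[k] C →ₗ[k] M) (c : C) :
    ∑ i ∈ Finset.range (n c), ∑ j ∈ Finset.range (n (c₁ c i)),
      ∑ t ∈ Finset.range (n (c₂ c i)),
      B (c₁ (c₁ c i) j) (c₂ (c₁ c i) j) (c₁ (c₂ c i) t) (c₂ (c₂ c i) t) =
    ∑ i ∈ Finset.range (n c), ∑ j ∈ Finset.range (n (c₂ c i)),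
      ∑ t ∈ Finset.range (n (c₁ (c₂ c i) j)),
      B (c₁ c i) (c₁ (c₁ (c₂ c i) j) t) (c₂ (c₁ (c₂ c i) j) t) (c₂ (c₂ c i) j) := by
  let Lf : (C →ₗ[k] C →ₗ[k] M) →ₗ[k] C →ₗ[k] M :=
    (LinearMap.lcomp k M (Coalgebra.comul (R := k) (A := C))) ∘ₗ
      (TensorProduct.uncurry (RingHom.id k) C C M)
  have hL : ∀ f x, Lf f x = ∑ t ∈ Finset.range (n x), f (c₁ x t) (c₂ x t) := by
    intro f x
    simp [Lf, hrep x]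
  let B' : C →ₗ[k] C →ₗ[k] C →ₗ[k] M := B.compr₂ Lf
  have h1 := coassoc_sum hrep B' c
  have hB' : ∀ x y z, B' x y z = ∑ t ∈ Finset.range (n z), B x y (c₁ z t) (c₂ z t) := by
    intro x y z
    exact hL _ _
  simp only [hB'] at h1
  rw [h1]
  refine Finset.sum_congr rfl fun i _ => ?_
  exact (coassoc_sum hrep (B (c₁ c i)) (c₂ c i)).symm

include hrep in
theorem antipode_sum_left (h : H) : ∑ i ∈ Finset.range (n h),
    HopfAlgebra.antipode k (c₁ h i) * c₂ h i = Coalgebra.counit (R := k) h • (1 : H) := by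
  have := HopfAlgebra.mul_antipode_rTensor_comul_apply (R := k) h
  rw [hrep h] at this
  simpa [Algebra.algebraMap_eq_smul_one] using this

include hrep in
theorem antipode_sum_right (h : H) : ∑ i ∈ Finset.range (n h),
    c₁ h i * HopfAlgebra.antipode k (c₂ h i) = Coalgebra.counit (R := k) h • (1 : H) := by
  have := HopfAlgebra.mul_antipode_lTensor_comul_apply (R := k) h
  rw [hrep h] at this
  simpa [Algebra.algebraMap_eq_smul_one] using this

include hrep in
theorem comul_antipode_rep (h : H) : Coalgebra.comul (R := k) (HopfAlgebra.antipode k h) =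
    ∑ i ∈ Finset.range (n h),
      HopfAlgebra.antipode k (c₂ h i) ⊗ₜ[k] HopfAlgebra.antipode k (c₁ h i) := by
  let S : H →ₗ[k] H := HopfAlgebra.antipode k
  let G : WithConv (H →ₗ[k] H ⊗[k] H) :=
    toConv (TensorProduct.map S S ∘ₗ (TensorProduct.comm k H H).toLinearMap ∘ₗ Coalgebra.comul)
  have hG : ∀ h, G h = ∑ i ∈ Finset.range (n h), S (c₂ h i) ⊗ₜ[k] S (c₁ h i) := by
    intro h
    simp [G, hrep h]
  have left : G * toConv (Coalgebra.comul (R := k) (A := H)) = 1 := by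
    ext h
    rw [conv_apply_rep hrep]
    let B : H →ₗ[k] H →ₗ[k] H →ₗ[k] H →ₗ[k] H ⊗[k] H :=
      LinearMap.mk₂ k (fun x y => (TensorProduct.mk k H H).compl₁₂
          (LinearMap.mulLeft k (S y)) (LinearMap.mulLeft k (S x)))
        (by intros; ext; simp [add_mul, TensorProduct.tmul_add])
        (by intros; ext; simp)
        (by intros; ext; simp [add_mul, TensorProduct.add_tmul])
        (by intros; ext; simp [TensorProduct.smul_tmul'])
    have hB : ∀ x y z w, B x y z w = (S y * z) ⊗ₜ[k] (S x * w) := fun _ _ _ _ => rfl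
    have h4 := coassoc4 hrep B h
    simp only [hB] at h4
    have hΔ : ∀ x : H, (toConv (Coalgebra.comul (R := k) (A := H))) x =
      ∑ i ∈ Finset.range (n x), c₁ x i ⊗ₜ[k] c₂ x i := hrep
    simp only [hG, hΔ, Finset.sum_mul_sum,
      Algebra.TensorProduct.tmul_mul_tmul]
    rw [h4]
    simp only [← TensorProduct.sum_tmul]
    have e : ∀ x, ∑ t ∈ Finset.range (n x), S (c₁ x t) * c₂ x t =
      Coalgebra.counit (R := k) x • (1 : H) := antipode_sum_left hrep
    simp only [e, TensorProduct.smul_tmul]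
    simp only [← TensorProduct.tmul_sum, ← mul_smul_comm, ← Finset.mul_sum]
    have e2 : ∀ x, ∑ t ∈ Finset.range (n x), Coalgebra.counit (R := k) (c₁ x t) • c₂ x t = x :=
      fun x => counit_left hrep LinearMap.id x
    simp only [e2, e]
    simp [LinearMap.convOne_def, Algebra.algebraMap_eq_smul_one, Algebra.TensorProduct.one_def]
  have := left_inv_eq_right_inv left LinearMap.comul_right_inv
  have h2 := congrArg (fun t => t.ofConv h) this
  exact h2.symm.trans (hG h)

end antipode
end HochAux5

open TensorProduct
noncomputable section HochAux6
open WithConv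

section antip
variable {k H M : Type*} [CommRing k] [Ring H] [HopfAlgebra k H] [AddCommGroup M] [Module k M]
  {n : H → ℕ} {c₁ c₂ : H → ℕ → H}

theorem antipode_rep_sum (hrep : IsRep k n c₁ c₂) (B : H →ₗ[k] H →ₗ[k] M) (x : H) :
    ∑ j ∈ Finset.range (n (HopfAlgebra.antipode k x)),
      B (c₁ (HopfAlgebra.antipode k x) j) (c₂ (HopfAlgebra.antipode k x) j) =
    ∑ j ∈ Finset.range (n x),
      B (HopfAlgebra.antipode k (c₂ x j)) (HopfAlgebra.antipode k (c₁ x j)) := by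
  have h := congrArg (TensorProduct.lift B) (comul_antipode_rep hrep x)
  rw [hrep] at h
  simpa [map_sum] using h

end antip

section main
variable {k A H E : Type*} [CommRing k] [Ring A] [Algebra k A] [Ring H] [HopfAlgebra k H]
  [Ring E] [Algebra k E]
  {n : H → ℕ} {c₁ c₂ : H → ℕ → H} (hrep : IsRep k n c₁ c₂)
  {ι : A →ₐ[k] E} {γ : WithConv (H →ₗ[k] E)} {p : E →ₗ[k] A}
  {σ : H →ₗ[k] A →ₗ[k] A} {f finv : H →ₗ[k] H →ₗ[k] A}
  (R1 : ∀ a, γ * cst k H (ι a) = iA ι (σ.flip a) * γ)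
  (R2 : pull (pr1 k H H) γ * pull (pr2 k H H) γ =
    iA ι (TensorProduct.lift f) * pull (Bialgebra.mulCoalgHom k H) γ)
  (R3 : γ 1 = 1)
  (hp : ∀ a h, p (ι a * γ h) = Coalgebra.counit (R := k) h • a)
  (hf : iA ι (TensorProduct.lift finv) * iA ι (TensorProduct.lift f) = 1)
  {γi : WithConv (H →ₗ[k] E)}
  (hγi : ∀ h, γi h = ∑ i ∈ Finset.range (n h), ∑ j ∈ Finset.range (n (c₂ h i)),
    ι (finv (HopfAlgebra.antipode k (c₁ (c₂ h i) j)) (c₂ (c₂ h i) j)) *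
      γ (HopfAlgebra.antipode k (c₁ h i)))

include hrep hγi in
theorem gi_eq (h : H) : γi h = ∑ i ∈ Finset.range (n h),
    (iA ι (TensorProduct.lift finv) * pull (pr1 k H H) γ)
      (HopfAlgebra.antipode k (c₁ h i) ⊗ₜ[k] c₂ h i) := by
  let S : H →ₗ[k] H := HopfAlgebra.antipode k
  let B : H →ₗ[k] H →ₗ[k] H →ₗ[k] E :=
    LinearMap.mk₂ k (fun x y => LinearMap.mulRight k (γ (S x)) ∘ₗ ι.toLinearMap ∘ₗ finv (S y))
      (by intros; ext; simp [mul_add]) (by intros; ext; simp)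
      (by intros; ext; simp [add_mul]) (by intros; ext; simp)
  have hB : ∀ x y z, B x y z = ι (finv (S y) z) * γ (S x) := fun _ _ _ => rfl
  have h1 := coassoc_sum hrep B h
  simp only [hB] at h1
  rw [hγi]
  refine h1.symm.trans (Finset.sum_congr rfl fun i _ => ?_)
  rw [mul_pr1 hrep]
  let B2 : H →ₗ[k] H →ₗ[k] E := (LinearMap.mul k E).compl₁₂
    (ι.toLinearMap ∘ₗ finv.flip (c₂ h i)) γ.ofConv
  exact (antipode_rep_sum hrep B2 (c₁ h i)).symm

include hrep R2 R3 hf hγi in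
theorem gi_mul : γi * γ = 1 := by
  ext h
  rw [conv_apply_rep hrep]
  set Z := iA ι (TensorProduct.lift finv) * pull (pr1 k H H) γ with hZ
  have hZ2 : Z * pull (pr2 k H H) γ = pull (Bialgebra.mulCoalgHom k H) γ := by
    rw [hZ, mul_assoc, R2, ← mul_assoc, hf, one_mul]
  let S : H →ₗ[k] H := HopfAlgebra.antipode k
  let B : H →ₗ[k] H →ₗ[k] H →ₗ[k] E :=
    LinearMap.mk₂ k (fun x y => LinearMap.mulLeft k (Z (S x ⊗ₜ[k] y)) ∘ₗ γ.ofConv)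
      (by intros; ext; simp [add_mul, TensorProduct.add_tmul])
      (by intros; ext; simp [← TensorProduct.smul_tmul'])
      (by intros; ext; simp [add_mul, TensorProduct.tmul_add]) (by intros; ext; simp)
  have hB : ∀ x y z, B x y z = Z (S x ⊗ₜ[k] y) * γ z := fun _ _ _ => rfl
  have h1 := coassoc_sum hrep B h
  simp only [hB] at h1
  simp only [gi_eq hrep hγi, Finset.sum_mul]
  refine h1.trans ?_
  have h2 : ∀ x y : H, ∑ j ∈ Finset.range (n y), Z (x ⊗ₜ[k] c₁ y j) * γ (c₂ y j) = γ (x * y) := by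
    intro x y
    rw [← mul_pr2 hrep, hZ2]; rfl
  simp only [h2]
  rw [← map_sum, antipode_sum_left hrep, map_smul, R3]
  simp [LinearMap.convOne_def, Algebra.algebraMap_eq_smul_one]

include hrep R2 R3 in
theorem g_gS (h : H) : (γ * toConv (γ.ofConv ∘ₗ HopfAlgebra.antipode k)) h =
    ι (∑ i ∈ Finset.range (n h), f (c₁ h i) (HopfAlgebra.antipode k (c₂ h i))) := by
  let S : H →ₗ[k] H := HopfAlgebra.antipode k
  rw [conv_apply_rep hrep]
  have e1 : ∀ x y, γ x * γ y = ∑ j ∈ Finset.range (n x), ∑ t ∈ Finset.range (n y),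
      ι (f (c₁ x j) (c₁ y t)) * γ (c₂ x j * c₂ y t) := by
    intro x y
    rw [← pr1_pr2 (k := k) γ γ x y, R2, conv_tmul hrep hrep]
    rfl
  let B0 : H →ₗ[k] H →ₗ[k] H →ₗ[k] H →ₗ[k] E :=
      LinearMap.mk₂ k (fun x y => (LinearMap.mul k E).compl₁₂
          (ι.toLinearMap ∘ₗ f x) (γ.ofConv ∘ₗ LinearMap.mulLeft k y))
        (by intros; ext; simp [add_mul])
        (by intros; ext; simp)
        (by intros; ext; simp [add_mul, mul_add])
        (by intros; ext; simp)
  have hB0 : ∀ x y z w, B0 x y z w = ι (f x z) * γ (y * w) := fun _ _ _ _ => rfl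
  let B : H →ₗ[k] H →ₗ[k] H →ₗ[k] H →ₗ[k] E :=
      LinearMap.mk₂ k (fun x y => ((B0 x y).compl₁₂ S S).flip)
        (by intros; ext; simp)
        (by intros; ext; simp)
        (by intros; ext; simp)
        (by intros; ext; simp)
  have hB : ∀ x y z w, B x y z w = ι (f x (S w)) * γ (y * S z) := fun _ _ _ _ => rfl
  have e2 : ∀ x y, γ x * γ (S y) = ∑ j ∈ Finset.range (n x), ∑ t ∈ Finset.range (n y),
      ι (f (c₁ x j) (S (c₂ y t))) * γ (c₂ x j * S (c₁ y t)) := by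
    intro x y
    rw [e1]
    exact Finset.sum_congr rfl fun j _ => antipode_rep_sum hrep (B0 (c₁ x j) (c₂ x j)) y
  have h4 := coassoc4 hrep B h
  simp only [hB] at h4
  have e3 : ∀ y, (toConv (γ.ofConv ∘ₗ HopfAlgebra.antipode k) : WithConv (H →ₗ[k] E)) y = γ (S y) :=
    fun _ => rfl
  simp only [e3, e2]
  rw [h4, map_sum]
  refine Finset.sum_congr rfl fun i _ => ?_
  simp only [← Finset.mul_sum, ← map_sum]
  have e4 : ∀ x, ∑ t ∈ Finset.range (n x), c₁ x t * S (c₂ x t) =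
      Coalgebra.counit (R := k) x • (1 : H) := antipode_sum_right hrep
  simp only [e4, map_smul, R3, mul_smul_comm, mul_one]
  have e5 := counit_left hrep (ι.toLinearMap ∘ₗ f (c₁ h i) ∘ₗ S) (c₂ h i)
  exact e5

include hrep R1 R2 R3 hp hf hγi in
theorem mul_gi : γ * γi = 1 := by
  let S : H →ₗ[k] H := HopfAlgebra.antipode k
  have hp1 : ∀ a, p (ι a) = a := by
    intro a
    have := hp a 1
    rwa [R3, mul_one, Bialgebra.counit_one, one_smul] at this
  set γS : WithConv (H →ₗ[k] E) := toConv (γ.ofConv ∘ₗ HopfAlgebra.antipode k) with hγS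
  let z : H →ₗ[k] A := TensorProduct.lift finv ∘ₗ TensorProduct.map S LinearMap.id ∘ₗ Coalgebra.comul
  have hz : ∀ x, z x = ∑ j ∈ Finset.range (n x), finv (S (c₁ x j)) (c₂ x j) := by
    intro x; simp [z, hrep x]
  have hg : ∀ y, γi y = ∑ i ∈ Finset.range (n y), ι (z (c₂ y i)) * γS (c₁ y i) := by
    intro y
    rw [hγi]
    refine Finset.sum_congr rfl fun i _ => ?_
    rw [hz, map_sum, Finset.sum_mul]; rfl
  have hY : ∀ h, ∃ y, (γ * γi) h = ι y := by
    intro h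
    rw [conv_apply_rep hrep]
    let B : H →ₗ[k] H →ₗ[k] H →ₗ[k] E :=
      LinearMap.mk₂ k (fun x y => LinearMap.mulLeft k (γ x) ∘ₗ LinearMap.mulRight k (γS y) ∘ₗ
          ι.toLinearMap ∘ₗ z)
        (by intros; ext; simp [add_mul]) (by intros; ext; simp)
        (by intros; ext; simp [mul_add]) (by intros; ext; simp)
    have hB : ∀ x y w, B x y w = γ x * (ι (z w) * γS y) := fun _ _ _ => rfl
    have h1 := coassoc_sum hrep B h
    simp only [hB] at h1
    simp only [hg, Finset.mul_sum]
    rw [← h1]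
    have h2 : ∀ i, ∑ j ∈ Finset.range (n (c₁ h i)), γ (c₁ (c₁ h i) j) * (ι (z (c₂ h i)) *
        γS (c₂ (c₁ h i) j)) ∈ ι.range := by
      intro i
      have h3 : ∑ j ∈ Finset.range (n (c₁ h i)), γ (c₁ (c₁ h i) j) * (ι (z (c₂ h i)) *
        γS (c₂ (c₁ h i) j)) = (γ * cst k H (ι (z (c₂ h i))) * γS) (c₁ h i) := by
        rw [conv_apply_rep hrep]
        simp only [mul_cst_apply, mul_assoc]
      rw [h3, R1, mul_assoc, conv_apply_rep hrep]
      refine Subalgebra.sum_mem _ fun j _ => Subalgebra.mul_mem _ ⟨_, rfl⟩ ?_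
      rw [g_gS hrep R2 R3]
      exact ⟨_, rfl⟩
    obtain ⟨y, hy⟩ := Subalgebra.sum_mem ι.range (t := Finset.range (n h)) fun i _ => h2 i
    exact ⟨y, hy.symm⟩
  have hY2 : ∀ h, (γ * γi) h = ι (p ((γ * γi) h)) := by
    intro h
    obtain ⟨y, hy⟩ := hY h
    rw [hy, hp1]
  have hYγ : (γ * γi) * γ = γ := by rw [mul_assoc, gi_mul hrep R2 R3 hf hγi, mul_one]
  ext h
  rw [hY2]
  have h5 := congrArg (fun t => p (t h)) hYγ
  simp only [conv_apply_rep hrep (γ * γi) γ, map_sum] at h5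
  have h6 : ∀ x y, p ((γ * γi) x * γ y) = Coalgebra.counit (R := k) y • p ((γ * γi) x) := by
    intro x y
    conv_lhs => rw [hY2 x]
    rw [hp]
  simp only [h6] at h5
  have h7 := counit_right hrep (p ∘ₗ (γ * γi).ofConv) h
  simp only [LinearMap.comp_apply] at h7
  have h8 : p ((γ * γi) h) = p (γ h) := h7.symm.trans h5
  have h9 := hp 1 h
  rw [map_one, one_mul] at h9
  rw [h8, h9]
  simp [LinearMap.convOne_def, Algebra.algebraMap_eq_smul_one]

end main
end HochAux6

open TensorProduct
noncomputable section HochAux7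
open WithConv

theorem conj_aux {R : Type*} [Monoid R] {u v t c : R} (h1 : v * u = 1) (h2 : u * v = 1)
    (h : t * u = u * c) : v * t = c * v := by
  calc v * t = v * (t * u) * v := by rw [mul_assoc, mul_assoc, h2, mul_one]
    _ = c * v := by rw [h, ← mul_assoc, h1, one_mul]

theorem conj_aux2 {R : Type*} [Monoid R] {u v t c s : R} (h1 : t * u = u * c)
    (h2 : v * s = c * v) : t * (u * v) = u * v * s := by
  rw [← mul_assoc, h1, mul_assoc, mul_assoc, h2]

section main
variable {k A H E : Type*} [CommRing k] [Ring A] [Algebra k A] [Ring H] [HopfAlgebra k H]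
  [Ring E] [Algebra k E]

theorem gen_word {C : Type*} [AddCommGroup C] [Module k C] [Coalgebra k C]
    {ι : A →ₐ[k] E} {p : E →ₗ[k] A} (hp : ∀ a, p (ι a) = a)
    (W0 W1 : WithConv (C →ₗ[k] E)) (S : A →ₗ[k] C →ₗ[k] A) (r : ℕ) (x : E) (a : ℕ → A)
    (v : ℕ → C) :
    G0 (qq p) r x (fun i => Rw ι W0 W1 S r a i (v i)) =
      gen r (W1 (v (r + 1)) * x * W0 (v 0)) (fun i => S (a i) (v (i + 1))) := by
  rw [G0_gen p r x (fun i => Rw ι W0 W1 S r a i (v i))]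
  have e1 : Rw ι W0 W1 S r a (r + 1) = W1 := by simp [Rw]
  have e0 : Rw ι W0 W1 S r a 0 = W0 := by simp [Rw]
  rw [e1, e0]
  apply gen_congr
  intro i hi
  have e2 : Rw ι W0 W1 S r a (i + 1) = iA ι (S (a i)) := by
    simp [Rw, show i ≠ r by omega]
  rw [e2, iA_apply, hp]

variable {n : H → ℕ} {c₁ c₂ : H → ℕ → H} (hrep : IsRep k n c₁ c₂)
  {ι : A →ₐ[k] E} {γ : WithConv (H →ₗ[k] E)} {p : E →ₗ[k] A}
  {σ : H →ₗ[k] A →ₗ[k] A} {f finv : H →ₗ[k] H →ₗ[k] A}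
  (hσ : ∀ (h : H) (a b : A),
      σ h (a * b) = ∑ i ∈ Finset.range (n h), σ (c₁ h i) a * σ (c₂ h i) b)
  (hσ1 : ∀ h : H, σ h (1 : A) = Coalgebra.counit (R := k) h • (1 : A))
  (R1 : ∀ a, γ * cst k H (ι a) = iA ι (σ.flip a) * γ)
  (R2 : pull (pr1 k H H) γ * pull (pr2 k H H) γ =
    iA ι (TensorProduct.lift f) * pull (Bialgebra.mulCoalgHom k H) γ)
  (R3 : γ 1 = 1)
  (hp : ∀ a h, p (ι a * γ h) = Coalgebra.counit (R := k) h • a)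
  (hf : iA ι (TensorProduct.lift finv) * iA ι (TensorProduct.lift f) = 1)
  {γi : WithConv (H →ₗ[k] E)}
  (hγi : ∀ h, γi h = ∑ i ∈ Finset.range (n h), ∑ j ∈ Finset.range (n (c₂ h i)),
    ι (finv (HopfAlgebra.antipode k (c₁ (c₂ h i) j)) (c₂ (c₂ h i) j)) *
      γ (HopfAlgebra.antipode k (c₁ h i)))
  (bd : ∀ r : ℕ, E ⊗[k] (⨂[k]^(r+1) (A ⧸ (Submodule.span k {(1 : A)}))) →ₗ[k]
    E ⊗[k] (⨂[k]^r (A ⧸ (Submodule.span k {(1 : A)}))))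
  (hbd : ∀ r x (a : ℕ → A), bd r (gen (r + 1) x a) =
    ∑ j ∈ Finset.range (r + 2), (-1 : ℤ) ^ j • gen r (fX ι r x a j) (fA r a j))
  (θ : H → ∀ r : ℕ, E ⊗[k] (⨂[k]^r (A ⧸ (Submodule.span k {(1 : A)}))) →ₗ[k]
      E ⊗[k] (⨂[k]^r (A ⧸ (Submodule.span k {(1 : A)}))))
  (hθ : ∀ h r x (a : ℕ → A), θ h r (gen r x a) = sw n c₁ c₂ (r + 1) h (fun v =>
    gen r (γ (v (r + 1)) * x * γi (v 0)) (fun i => σ (v (i + 1)) (a i))))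

/-- `a ↦ (h ⊗ l ↦ (a^l)^h)`. -/
def TT (σ : H →ₗ[k] A →ₗ[k] A) : A →ₗ[k] (H ⊗[k] H) →ₗ[k] A where
  toFun a := TensorProduct.lift (σ.flip.compr₂ LinearMap.id ∘ₗ σ.flip a).flip
  map_add' a b := by ext; simp
  map_smul' t a := by ext; simp

@[simp] theorem TT_apply (σ : H →ₗ[k] A →ₗ[k] A) (a : A) (h l : H) :
    TT σ a (h ⊗ₜ l) = σ h (σ l a) := by
  simp [TT]

/-- `a ↦ (h ⊗ l ↦ a^{hl})`. -/
def SS (σ : H →ₗ[k] A →ₗ[k] A) : A →ₗ[k] (H ⊗[k] H) →ₗ[k] A :=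
  LinearMap.lcomp k A (Bialgebra.mulCoalgHom k H).toLinearMap ∘ₗ σ.flip

theorem iA_SS (a : A) : iA ι (SS σ a) = pull (Bialgebra.mulCoalgHom k H) (iA ι (σ.flip a)) := rfl

include hrep hσ hσ1 R1 R2 R3 hp hf hγi hbd hθ in
theorem abs_final (h l : H) :
    (∀ z, ∃ w, θ h 0 (θ l 0 z) - θ (h * l) 0 z = bd 0 w) ∧
    (∀ r z, bd r z = 0 → ∃ w, θ h (r + 1) (θ l (r + 1) z) - θ (h * l) (r + 1) z =
      bd (r + 1) w) := by
  have hp1 : ∀ a, p (ι a) = a := by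
    intro a
    have := hp a 1
    rwa [R3, mul_one, Bialgebra.counit_one, one_smul] at this
  obtain ⟨N, d₁, d₂, hC⟩ := exists_isRep k (H ⊗[k] H)
  have gl := gi_mul hrep R2 R3 hf hγi
  have gr := mul_gi hrep R1 R2 R3 hp hf hγi
  set U := pull (pr1 k H H) γ * pull (pr2 k H H) γ with hU
  set Ui := pull (pr2 k H H) γi * pull (pr1 k H H) γi with hUi
  set V := pull (Bialgebra.mulCoalgHom k H) γ with hV
  set Vi := pull (Bialgebra.mulCoalgHom k H) γi with hVi
  have l1 : pull (pr1 k H H) γi * pull (pr1 k H H) γ = 1 := by rw [← pull_mul, gl, pull_one]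
  have l2 : pull (pr2 k H H) γi * pull (pr2 k H H) γ = 1 := by rw [← pull_mul, gl, pull_one]
  have r1 : pull (pr1 k H H) γ * pull (pr1 k H H) γi = 1 := by rw [← pull_mul, gr, pull_one]
  have r2 : pull (pr2 k H H) γ * pull (pr2 k H H) γi = 1 := by rw [← pull_mul, gr, pull_one]
  have UiU : Ui * U = 1 := by
    rw [hU, hUi, mul_assoc, ← mul_assoc (pull (pr1 k H H) γi), l1, one_mul, l2]
  have UUi : U * Ui = 1 := by
    rw [hU, hUi, mul_assoc, ← mul_assoc (pull (pr2 k H H) γ), r2, one_mul, r1]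
  have ViV : Vi * V = 1 := by rw [hV, hVi, ← pull_mul, gl, pull_one]
  have VVi : V * Vi = 1 := by rw [hV, hVi, ← pull_mul, gr, pull_one]
  set φ := TensorProduct.lift f with hφ
  have hφ2 : iA ι φ = U * Vi := by rw [R2, mul_assoc, VVi, mul_one]
  have h5 : ∀ a, iA ι (SS σ a) * V = V * cst k (H ⊗[k] H) (ι a) := by
    intro a
    rw [iA_SS, hV, ← pull_mul, ← R1, pull_mul, pull_cst]
  have hTU0 : ∀ a, pull (pr1 k H H) γ * pull (pr2 k H H) (iA ι (σ.flip a)) =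
      iA ι (TT σ a) * pull (pr1 k H H) γ := by
    intro a
    ext h l
    show (pull (pr1 k H H) γ * pull (pr2 k H H) (iA ι (σ.flip a))) (h ⊗ₜ[k] l) =
      (iA ι (TT σ a) * pull (pr1 k H H) γ) (h ⊗ₜ[k] l)
    rw [pr1_pr2, mul_pr1 hrep]
    have := congrArg (fun t => t h) (R1 (σ l a))
    simp only [mul_cst_apply, conv_apply_rep hrep (iA ι (σ.flip (σ l a)))] at this
    simpa using this
  have hTU : ∀ a, iA ι (TT σ a) * U = U * cst k (H ⊗[k] H) (ι a) := by
    intro a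
    rw [hU, ← mul_assoc, ← hTU0, mul_assoc, mul_assoc, ← pull_mul, ← R1, pull_mul, pull_cst]
  have h4 : ∀ a, Ui * iA ι (TT σ a) = cst k (H ⊗[k] H) (ι a) * Ui :=
    fun a => conj_aux UiU UUi (hTU a)
  have hVS : ∀ a, Vi * iA ι (SS σ a) = cst k (H ⊗[k] H) (ι a) * Vi :=
    fun a => conj_aux ViV VVi (h5 a)
  have h3 : ∀ a, iA ι (TT σ a) * iA ι φ = iA ι φ * iA ι (SS σ a) := by
    intro a
    rw [hφ2]
    exact conj_aux2 (hTU a) (hVS a)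
  have hσm : ∀ a b, iA ι (σ.flip (a * b)) = iA ι (σ.flip a) * iA ι (σ.flip b) := by
    intro a b
    ext h
    rw [conv_apply_rep hrep]
    simp [hσ]
  have hS : ∀ a b, iA ι (SS σ (a * b)) = iA ι (SS σ a) * iA ι (SS σ b) := by
    intro a b
    rw [iA_SS, iA_SS, iA_SS, hσm, pull_mul]
  have hT : ∀ a b, iA ι (TT σ (a * b)) = iA ι (TT σ a) * iA ι (TT σ b) := by
    intro a b
    ext h l
    show (iA ι (TT σ (a * b))) (h ⊗ₜ[k] l) = (iA ι (TT σ a) * iA ι (TT σ b)) (h ⊗ₜ[k] l)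
    rw [conv_tmul hrep hrep, Finset.sum_comm]
    simp [hσ]
  have hS1 : ∀ c, SS σ 1 c = Coalgebra.counit (R := k) c • (1 : A) := by
    intro c
    have : SS σ 1 c = σ (Bialgebra.mulCoalgHom k H c) 1 := rfl
    rw [this, hσ1]
    congr 1
    exact CoalgHomClass.counit_comp_apply (Bialgebra.mulCoalgHom k H) c
  have hT1 : ∀ c, TT σ 1 c = Coalgebra.counit (R := k) c • (1 : A) := by
    intro c
    induction c using TensorProduct.induction_on with
    | zero => simp
    | add x y hx hy => simp [hx, hy, add_smul]
    | tmul x y => simp [hσ1, smul_smul, mul_comm]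
  refine homotopy_final (n := N) (c₁ := d₁) (c₂ := d₂) (U := U) (Ui := Ui) (V := V) (Vi := Vi)
    (φ := φ) (S := SS σ) (T := TT σ) hC hp1 bd hbd ?_ R2.symm h3 h4 h5 hS hT hS1 hT1 (h ⊗ₜ[k] l)
    (fun r => θ h r ∘ₗ θ l r) (fun r => θ (h * l) r) ?_ ?_
  · rw [hφ2, ← mul_assoc, UiU, one_mul]
  · intro r x a
    rw [LinearMap.comp_apply, hθ, sw_map]
    simp only [hθ]
    have e : ∀ v v' : ℕ → H, gen (k := k) r (γ (v' (r + 1)) * (γ (v (r + 1)) * x * γi (v 0)) * γi (v' 0))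
        (fun i => σ (v' (i + 1)) (σ (v (i + 1)) (a i))) =
        G0 (qq p) r x (fun i => Rw ι Ui U (TT σ) r a i (v' i ⊗ₜ[k] v i)) := by
      intro v v'
      rw [gen_word hp1 Ui U (TT σ) r x a (fun i => v' i ⊗ₜ[k] v i)]
      simp only [hU, hUi, pr1_pr2, pr2_pr1, TT_apply, mul_assoc]
    simp only [e]
    unfold Qf
    rw [sw_sw hrep hrep (r + 1) (fun i => (Rw ι Ui U (TT σ) r a i).ofConv),
      sw_eq_cvl hC (r + 1) (fun i => (Rw ι Ui U (TT σ) r a i).ofConv)]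
  · intro r x a
    rw [hθ]
    have e : ∀ v : ℕ → H, gen (k := k) r (γ (v (r + 1)) * x * γi (v 0))
        (fun i => σ (v (i + 1)) (a i)) =
        G0 (qq p) r x (fun i => Rw ι γi γ σ.flip r a i (v i)) := by
      intro v
      rw [gen_word hp1 γi γ σ.flip r x a v]
      rfl
    simp only [e]
    unfold Qf
    rw [sw_eq_cvl hrep (r + 1) (fun i => (Rw ι γi γ σ.flip r a i).ofConv),
      sw_eq_cvl hC (r + 1) (fun i => (Rw ι Vi V (SS σ) r a i).ofConv)]
    have e2 := cvl_pull (Bialgebra.mulCoalgHom k H) (r + 1)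
      (fun i => (Rw ι γi γ σ.flip r a i).ofConv) (G0 (qq p) r x) (h ⊗ₜ[k] l)
    refine Eq.trans e2 ?_
    congr 3
    ext1 i
    unfold Rw
    split_ifs <;> rfl

end main
end HochAux7

open TensorProduct
noncomputable section HochAux8
open WithConv

section crossed
variable {k A H : Type*} [CommRing k] [Ring A] [Algebra k A] [Ring H] [HopfAlgebra k H]
  {n : H → ℕ} {c₁ c₂ : H → ℕ → H} (hrep : IsRep k n c₁ c₂)
  {σ : H →ₗ[k] A →ₗ[k] A} {f : H →ₗ[k] H →ₗ[k] A}

/-- Inclusion of `A` in the ordinary tensor product algebra. -/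
abbrev jA (k A H : Type*) [CommRing k] [Ring A] [Algebra k A] [Ring H] [HopfAlgebra k H] :
    A →ₐ[k] A ⊗[k] H := Algebra.TensorProduct.includeLeft

/-- Inclusion of `H` in the ordinary tensor product algebra. -/
def jH (k A H : Type*) [CommRing k] [Ring A] [Algebra k A] [Ring H] [HopfAlgebra k H] :
    WithConv (H →ₗ[k] A ⊗[k] H) := toConv (TensorProduct.mk k A H 1)

/-- `f(h₁,l₁) ⊗ h₂ l₂`. -/
def NN (f : H →ₗ[k] H →ₗ[k] A) : WithConv (H ⊗[k] H →ₗ[k] A ⊗[k] H) :=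
  iA (jA k A H) (TensorProduct.lift f) * pull (Bialgebra.mulCoalgHom k H) (jH k A H)

include hrep in
theorem NN_apply (h l : H) : NN f (h ⊗ₜ[k] l) =
    ∑ i ∈ Finset.range (n h), ∑ j ∈ Finset.range (n l),
      f (c₁ h i) (c₁ l j) ⊗ₜ[k] (c₂ h i * c₂ l j) := by
  rw [NN, conv_tmul hrep hrep]
  simp [jH]

include hrep in
theorem crossedMul_sum (a b : A) (h l : H) :
    crossedMul k A H σ f (a ⊗ₜ[k] h) (b ⊗ₜ[k] l) =
    ∑ t ∈ Finset.range (n l), ∑ i ∈ Finset.range (n h), ∑ j ∈ Finset.range (n (c₁ h i)),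
      (a * (σ (c₁ (c₁ h i) j) b * f (c₂ (c₁ h i) j) (c₁ l t))) ⊗ₜ[k] (c₂ h i * c₂ l t) := by
  simp only [crossedMul, TensorProduct.lift.tmul, LinearMap.compl₂_apply, LinearMap.comp_apply,
    LinearMap.llcomp_apply, TensorProduct.curry_apply, TensorProduct.map_tmul, hrep h, hrep l,
    LinearMap.lTensor_tmul, LinearMap.rTensor_tmul, map_sum, TensorProduct.tmul_sum,
    TensorProduct.sum_tmul, LinearEquiv.coe_coe, TensorProduct.assoc_symm_tmul, hrep (c₁ h _),
    TensorProduct.tensorTensorTensorComm_tmul, LinearMap.mul'_apply]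

include hrep in
theorem crossedMul_tmul (a b : A) (h l : H) :
    crossedMul k A H σ f (a ⊗ₜ[k] h) (b ⊗ₜ[k] l) =
      (a ⊗ₜ[k] (1 : H)) * (pull (pr1 k H H) (iA (jA k A H) (σ.flip b)) * NN f) (h ⊗ₜ[k] l) := by
  rw [crossedMul_sum hrep, pr1_mul hrep]
  simp only [NN_apply hrep, Finset.mul_sum]
  have key : ∀ u w : H, ∑ i ∈ Finset.range (n h), ∑ j ∈ Finset.range (n (c₁ h i)),
      (a * (σ (c₁ (c₁ h i) j) b * f (c₂ (c₁ h i) j) u)) ⊗ₜ[k] (c₂ h i * w) =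
      ∑ i ∈ Finset.range (n h), ∑ j ∈ Finset.range (n (c₂ h i)),
      (a * (σ (c₁ h i) b * f (c₁ (c₂ h i) j) u)) ⊗ₜ[k] (c₂ (c₂ h i) j * w) := by
    intro u w
    let B : H →ₗ[k] H →ₗ[k] H →ₗ[k] A ⊗[k] H :=
      LinearMap.mk₂ k (fun x y => TensorProduct.mk k A H (a * (σ x b * f y u)) ∘ₗ
          LinearMap.mulRight k w)
        (by intros; ext; simp [add_mul, mul_add, TensorProduct.add_tmul])
        (by intros; ext; simp [TensorProduct.smul_tmul'])
        (by intros; ext; simp [mul_add, TensorProduct.add_tmul])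
        (by intros; ext; simp [TensorProduct.smul_tmul'])
    exact coassoc_sum hrep B h
  simp only [key]
  rw [Finset.sum_comm]
  refine Finset.sum_congr rfl fun i _ => ?_
  rw [Finset.sum_comm]
  refine Finset.sum_congr rfl fun j _ => Finset.sum_congr rfl fun t _ => ?_
  simp

variable (hσ : ∀ (h : H) (a b : A),
      σ h (a * b) = ∑ i ∈ Finset.range (n h), σ (c₁ h i) a * σ (c₂ h i) b)
  (hσ1 : ∀ h : H, σ h (1 : A) = Coalgebra.counit (R := k) h • (1 : A))

/-- Left multiplication by `A`. -/
def lam (k A H : Type*) [CommRing k] [Ring A] [Algebra k A] [Ring H] [HopfAlgebra k H] :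
    A →ₐ[k] Module.End k (A ⊗[k] H) := (Algebra.lmul k (A ⊗[k] H)).comp (jA k A H)

theorem lam_apply (a : A) (z : A ⊗[k] H) : lam k A H a z = (a ⊗ₜ[k] (1 : H)) * z := rfl

@[simp] theorem lam_tmul (a b : A) (h : H) : lam k A H a (b ⊗ₜ[k] h) = (a * b) ⊗ₜ[k] h := by
  simp [lam_apply]

/-- Left multiplication by `γ`. -/
def Gam (σ : H →ₗ[k] A →ₗ[k] A) (f : H →ₗ[k] H →ₗ[k] A) :
    WithConv (H →ₗ[k] Module.End k (A ⊗[k] H)) :=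
  toConv (crossedMul k A H σ f ∘ₗ TensorProduct.mk k A H 1)

theorem Gam_apply (h : H) (z : A ⊗[k] H) : Gam σ f h z = crossedMul k A H σ f (1 ⊗ₜ[k] h) z := rfl

include hrep in
theorem Gam_tmul (h l : H) (b : A) : Gam σ f h (b ⊗ₜ[k] l) =
    (pull (pr1 k H H) (iA (jA k A H) (σ.flip b)) * NN f) (h ⊗ₜ[k] l) := by
  rw [Gam_apply, crossedMul_tmul hrep, ← Algebra.TensorProduct.one_def, one_mul]

theorem crossedMul_eq (a : A) (h : H) :
    crossedMul k A H σ f (a ⊗ₜ[k] h) = lam k A H a * Gam σ f h := by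
  obtain ⟨n, c₁, c₂, hrep⟩ := exists_isRep k H
  refine TensorProduct.ext' fun b l => ?_
  rw [Module.End.mul_apply, Gam_tmul hrep, crossedMul_tmul hrep, lam_apply]

include hσ1 in
theorem Gam_one_tmul (h l : H) : Gam σ f h (1 ⊗ₜ[k] l) = NN f (h ⊗ₜ[k] l) := by
  obtain ⟨n, c₁, c₂, hrep⟩ := exists_isRep k H
  rw [Gam_tmul hrep]
  have : iA (jA k A H) (σ.flip 1) = 1 := by
    ext h
    simp [hσ1, LinearMap.convOne_def, Algebra.algebraMap_eq_smul_one, TensorProduct.smul_tmul',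
      Algebra.TensorProduct.one_def]
  rw [this, pull_one, one_mul]

include hrep hσ in
theorem Gam_cst (b : A) :
    Gam σ f * cst k H (lam k A H b) = iA (lam k A H) (σ.flip b) * Gam σ f := by
  have hσm : ∀ a b, iA (jA k A H) (σ.flip (a * b)) =
      iA (jA k A H) (σ.flip a) * iA (jA k A H) (σ.flip b) := by
    intro a b
    ext h
    rw [conv_apply_rep hrep]
    simp [hσ]
  refine WithConv.ofConv_injective (LinearMap.ext fun h => ?_)
  refine TensorProduct.ext' fun b' l => ?_
  rw [mul_cst_apply, conv_apply_rep hrep, Module.End.mul_apply, lam_tmul, Gam_tmul hrep, hσm,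
    pull_mul, mul_assoc, pr1_mul hrep, LinearMap.sum_apply]
  refine Finset.sum_congr rfl fun i _ => ?_
  rw [Module.End.mul_apply, Gam_tmul hrep]
  rfl

end crossed
end HochAux8

open TensorProduct
noncomputable section HochAux9
open WithConv

section crossed2
variable {k A H : Type*} [CommRing k] [Ring A] [Algebra k A] [Ring H] [HopfAlgebra k H]
  {n : H → ℕ} {c₁ c₂ : H → ℕ → H} (hrep : IsRep k n c₁ c₂)
  {σ : H →ₗ[k] A →ₗ[k] A} {f finv : H →ₗ[k] H →ₗ[k] A}
  (hw : IsWeakAction k A H n c₁ c₂ σ) (hn : IsNormal k A H f)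
  (hco : IsCocycle k A H n c₁ c₂ σ f) (htw : IsTwistedModule k A H n c₁ c₂ σ f)

include hrep in
theorem conv_tmul3 {E : Type*} [Ring E] [Algebra k E]
    (F G : WithConv ((H ⊗[k] H) ⊗[k] H →ₗ[k] E)) (h l m : H) :
    (F * G) ((h ⊗ₜ[k] l) ⊗ₜ[k] m) =
    ∑ i ∈ Finset.range (n h), ∑ j ∈ Finset.range (n l), ∑ t ∈ Finset.range (n m),
      F ((c₁ h i ⊗ₜ c₁ l j) ⊗ₜ c₁ m t) * G ((c₂ h i ⊗ₜ c₂ l j) ⊗ₜ c₂ m t) := by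
  rw [LinearMap.convMul_apply, TensorProduct.comul_tmul, comul_tmul_rep hrep hrep, hrep m]
  simp only [TensorProduct.sum_tmul, TensorProduct.tmul_sum, map_sum,
    TensorProduct.AlgebraTensorModule.tensorTensorTensorComm_tmul,
    TensorProduct.map_tmul, LinearMap.mul'_apply]
  rw [Finset.sum_comm]
  refine Finset.sum_congr rfl fun i _ => ?_
  exact Finset.sum_comm

/-- `(h ⊗ l) ⊗ m ↦ h ⊗ lm`. -/
def psiR (k H : Type*) [CommRing k] [Ring H] [HopfAlgebra k H] :
    (H ⊗[k] H) ⊗[k] H →ₗc[k] H ⊗[k] H :=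
  (Coalgebra.TensorProduct.map (CoalgHom.id k H) (Bialgebra.mulCoalgHom k H)).comp
    (Coalgebra.TensorProduct.assoc k k H H H).toCoalgHom

/-- `(h ⊗ l) ⊗ m ↦ hl ⊗ m`. -/
def psiL (k H : Type*) [CommRing k] [Ring H] [HopfAlgebra k H] :
    (H ⊗[k] H) ⊗[k] H →ₗc[k] H ⊗[k] H :=
  Coalgebra.TensorProduct.map (Bialgebra.mulCoalgHom k H) (CoalgHom.id k H)

@[simp] theorem psiR_tmul (h l m : H) : psiR k H ((h ⊗ₜ l) ⊗ₜ m) = h ⊗ₜ (l * m) := rfl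
@[simp] theorem psiL_tmul (x : H ⊗[k] H) (m : H) :
    psiL k H (x ⊗ₜ m) = (Bialgebra.mulCoalgHom k H x) ⊗ₜ m := rfl
@[simp] theorem muc_tmul (h l : H) : Bialgebra.mulCoalgHom k H (h ⊗ₜ l) = h * l := rfl

/-- `σ(h) f(l,m)`. -/
def XX (σ : H →ₗ[k] A →ₗ[k] A) (f : H →ₗ[k] H →ₗ[k] A) : (H ⊗[k] H) ⊗[k] H →ₗ[k] A :=
  TensorProduct.lift σ ∘ₗ TensorProduct.map LinearMap.id (TensorProduct.lift f) ∘ₗ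
    (TensorProduct.assoc k H H H).toLinearMap

@[simp] theorem XX_tmul (h l m : H) : XX σ f ((h ⊗ₜ l) ⊗ₜ m) = σ h (f l m) := rfl

include hrep hco in
theorem cocycle_conv :
    iA (jA k A H) (XX σ f) * pull (psiR k H) (iA (jA k A H) (TensorProduct.lift f)) =
    pull (pr1 k (H ⊗[k] H) H) (iA (jA k A H) (TensorProduct.lift f)) *
      pull (psiL k H) (iA (jA k A H) (TensorProduct.lift f)) := by
  refine WithConv.ofConv_injective (TensorProduct.ext_threefold fun h l m => ?_)
  rw [conv_tmul3 hrep]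
  obtain ⟨N, d₁, d₂, hC⟩ := exists_isRep k (H ⊗[k] H)
  rw [pr1_mul hC]
  let g : H ⊗[k] H →ₗ[k] A := f.flip m ∘ₗ (Bialgebra.mulCoalgHom k H).toLinearMap
  have e1 : ∑ i ∈ Finset.range (N (h ⊗ₜ[k] l)),
      iA (jA k A H) (TensorProduct.lift f) (d₁ (h ⊗ₜ[k] l) i) *
      iA (jA k A H) g (d₂ (h ⊗ₜ[k] l) i) =
      (iA (jA k A H) (TensorProduct.lift f) * iA (jA k A H) g) (h ⊗ₜ[k] l) :=
    (conv_apply_rep hC _ _ _).symm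
  refine Eq.trans ?_ e1.symm
  rw [conv_tmul hrep hrep]
  have e2 := congrArg (jA k A H) (hco h l m)
  simp only [map_sum, map_mul] at e2
  exact e2

include hrep hco hw in
theorem Gam_Gam_one (h l m : H) : (Gam σ f h * Gam σ f l) (1 ⊗ₜ[k] m) =
    (iA (lam k A H) (TensorProduct.lift f) * pull (Bialgebra.mulCoalgHom k H) (Gam σ f))
      (h ⊗ₜ[k] l) (1 ⊗ₜ[k] m) := by
  have hσ1 := hw.2.1
  obtain ⟨N, d₁, d₂, hC⟩ := exists_isRep k (H ⊗[k] H)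
  have eR : (iA (lam k A H) (TensorProduct.lift f) * pull (Bialgebra.mulCoalgHom k H) (Gam σ f))
      (h ⊗ₜ[k] l) (1 ⊗ₜ[k] m) =
      (pull (pr1 k (H ⊗[k] H) H) (iA (jA k A H) (TensorProduct.lift f)) *
        pull (psiL k H) (NN f)) ((h ⊗ₜ[k] l) ⊗ₜ[k] m) := by
    rw [conv_apply_rep hC, pr1_mul hC, LinearMap.sum_apply]
    refine Finset.sum_congr rfl fun i _ => ?_
    rw [Module.End.mul_apply, pull_apply, Gam_one_tmul hσ1]
    rfl
  have eL : (Gam σ f h * Gam σ f l) (1 ⊗ₜ[k] m) =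
      (iA (jA k A H) (XX σ f) * pull (psiR k H) (NN f)) ((h ⊗ₜ[k] l) ⊗ₜ[k] m) := by
    rw [Module.End.mul_apply, Gam_one_tmul hσ1, NN_apply hrep, conv_tmul3 hrep]
    simp only [map_sum]
    simp only [Gam_tmul hrep, pr1_mul hrep]
    refine Eq.trans ?_ Finset.sum_comm
    refine Finset.sum_congr rfl fun j _ => ?_
    refine Eq.trans ?_ Finset.sum_comm
    refine Finset.sum_congr rfl fun t _ => Finset.sum_congr rfl fun i _ => ?_
    rfl
  have e3 : pull (psiR k H) (pull (Bialgebra.mulCoalgHom k H) (jH k A H)) =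
      pull (psiL k H) (pull (Bialgebra.mulCoalgHom k H) (jH k A H)) := by
    refine WithConv.ofConv_injective (TensorProduct.ext_threefold fun h l m => ?_)
    show jH k A H (h * (l * m)) = jH k A H (h * l * m)
    rw [mul_assoc]
  rw [eL, eR, NN, pull_mul, pull_mul, ← mul_assoc, ← mul_assoc, cocycle_conv hrep hco, e3]

include hrep hco hw htw in
theorem Gam_Gam : pull (pr1 k H H) (Gam σ f) * pull (pr2 k H H) (Gam σ f) =
    iA (lam k A H) (TensorProduct.lift f) * pull (Bialgebra.mulCoalgHom k H) (Gam σ f) := by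
  have R1 := Gam_cst (f := f) hrep hw.1
  have hTU0 : ∀ a, pull (pr1 k H H) (Gam σ f) * pull (pr2 k H H) (iA (lam k A H) (σ.flip a)) =
      iA (lam k A H) (TT σ a) * pull (pr1 k H H) (Gam σ f) := by
    intro a
    refine WithConv.ofConv_injective (TensorProduct.ext' fun h l => ?_)
    rw [pr1_pr2, mul_pr1 hrep]
    have := congrArg (fun t => t h) (R1 (σ l a))
    simp only [mul_cst_apply, conv_apply_rep hrep (iA (lam k A H) (σ.flip (σ l a)))] at this
    simpa using this
  have hTU : ∀ a, (pull (pr1 k H H) (Gam σ f) * pull (pr2 k H H) (Gam σ f)) *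
      cst k (H ⊗[k] H) (lam k A H a) =
      iA (lam k A H) (TT σ a) * (pull (pr1 k H H) (Gam σ f) * pull (pr2 k H H) (Gam σ f)) := by
    intro a
    rw [← mul_assoc, ← hTU0, mul_assoc, mul_assoc, ← pull_mul, ← R1, pull_mul, pull_cst]
  have htw' : ∀ a, iA (lam k A H) (TT σ a) * iA (lam k A H) (TensorProduct.lift f) =
      iA (lam k A H) (TensorProduct.lift f) * iA (lam k A H) (SS σ a) := by
    intro a
    refine WithConv.ofConv_injective (TensorProduct.ext' fun h l => ?_)
    rw [conv_tmul hrep hrep, conv_tmul hrep hrep]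
    have e2 := congrArg (lam k A H) (htw h l a)
    simp only [map_sum, map_mul] at e2
    exact e2
  have hTV : ∀ a, (iA (lam k A H) (TensorProduct.lift f) *
        pull (Bialgebra.mulCoalgHom k H) (Gam σ f)) * cst k (H ⊗[k] H) (lam k A H a) =
      iA (lam k A H) (TT σ a) * (iA (lam k A H) (TensorProduct.lift f) *
        pull (Bialgebra.mulCoalgHom k H) (Gam σ f)) := by
    intro a
    rw [← mul_assoc (iA (lam k A H) (TT σ a)), htw', mul_assoc, mul_assoc, iA_SS, ← pull_mul, ← R1,
      pull_mul, pull_cst]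
  have base : ∀ (x : H ⊗[k] H) (m : H),
      (pull (pr1 k H H) (Gam σ f) * pull (pr2 k H H) (Gam σ f)) x (1 ⊗ₜ[k] m) =
      (iA (lam k A H) (TensorProduct.lift f) * pull (Bialgebra.mulCoalgHom k H) (Gam σ f)) x
        (1 ⊗ₜ[k] m) := by
    intro x m
    induction x using TensorProduct.induction_on with
    | zero => simp
    | add x y hx hy => rw [map_add, map_add, LinearMap.add_apply, LinearMap.add_apply, hx, hy]
    | tmul h l => rw [pr1_pr2]; exact Gam_Gam_one hrep hw hco h l m
  obtain ⟨N, d₁, d₂, hC⟩ := exists_isRep k (H ⊗[k] H)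
  refine WithConv.ofConv_injective (LinearMap.ext fun x => TensorProduct.ext' fun a m => ?_)
  have e : ∀ W : WithConv (H ⊗[k] H →ₗ[k] Module.End k (A ⊗[k] H)),
      W x (a ⊗ₜ[k] m) = (W * cst k (H ⊗[k] H) (lam k A H a)) x (1 ⊗ₜ[k] m) := by
    intro W
    rw [mul_cst_apply, Module.End.mul_apply, lam_tmul, mul_one]
  refine (e _).trans (Eq.trans ?_ (e _).symm)
  rw [hTU, hTV, conv_apply_rep hC, conv_apply_rep hC (iA (lam k A H) (TT σ a)),
    LinearMap.sum_apply, LinearMap.sum_apply]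
  refine Finset.sum_congr rfl fun i _ => ?_
  rw [Module.End.mul_apply, Module.End.mul_apply, base]

include hrep hco hw htw in
theorem crossedMul_assoc (x y z : A ⊗[k] H) :
    crossedMul k A H σ f (crossedMul k A H σ f x y) z =
      crossedMul k A H σ f x (crossedMul k A H σ f y z) := by
  have hl : ∀ a z, crossedMul k A H σ f (lam k A H a z) = lam k A H a * crossedMul k A H σ f z := by
    intro a z
    induction z using TensorProduct.induction_on with
    | zero => simp
    | add x y hx hy => rw [map_add, map_add, map_add, mul_add, hx, hy]
    | tmul b h => rw [lam_tmul, crossedMul_eq, crossedMul_eq, map_mul, mul_assoc]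
  have hg : ∀ h l, crossedMul k A H σ f (Gam σ f h (1 ⊗ₜ[k] l)) = Gam σ f h * Gam σ f l := by
    intro h l
    rw [Gam_one_tmul hw.2.1, NN_apply hrep, ← pr1_pr2, Gam_Gam hrep hw hco htw,
      conv_tmul hrep hrep]
    simp only [map_sum, crossedMul_eq]
    rfl
  have hgl : ∀ h b, Gam σ f h * lam k A H b = ∑ i ∈ Finset.range (n h),
      lam k A H (σ (c₁ h i) b) * Gam σ f (c₂ h i) := by
    intro h b
    have := congrArg (fun t => t h) (Gam_cst (f := f) hrep hw.1 b)
    simp only [mul_cst_apply, conv_apply_rep hrep (iA (lam k A H) (σ.flip b))] at this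
    exact this
  suffices key : crossedMul k A H σ f (crossedMul k A H σ f x y) =
      crossedMul k A H σ f x * crossedMul k A H σ f y by
    rw [key]; rfl
  induction x using TensorProduct.induction_on with
  | zero => simp
  | add x x' hx hx' => rw [map_add, LinearMap.add_apply, map_add, hx, hx', add_mul]
  | tmul a h =>
    induction y using TensorProduct.induction_on with
    | zero => simp
    | add y y' hy hy' => rw [map_add, map_add, hy, hy', map_add, mul_add]
    | tmul b l =>
      have e1 : crossedMul k A H σ f (a ⊗ₜ[k] h) (b ⊗ₜ[k] l) = lam k A H a
          (∑ i ∈ Finset.range (n h), lam k A H (σ (c₁ h i) b) (Gam σ f (c₂ h i) (1 ⊗ₜ[k] l))) := by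
        have := congrArg (fun t => t ((1 : A) ⊗ₜ[k] l)) (hgl h b)
        simp only [Module.End.mul_apply, lam_tmul, mul_one, LinearMap.sum_apply] at this
        rw [crossedMul_eq, Module.End.mul_apply, this]
      rw [e1, hl, map_sum]
      simp only [hl, hg]
      rw [crossedMul_eq, crossedMul_eq, mul_assoc, ← mul_assoc (Gam σ f h), hgl, Finset.sum_mul]
      simp only [mul_assoc]

include hrep hw hn in
theorem crossedMul_one_left (z : A ⊗[k] H) : crossedMul k A H σ f (1 ⊗ₜ[k] 1) z = z := by
  induction z using TensorProduct.induction_on with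
  | zero => simp
  | add x y hx hy => rw [map_add, hx, hy]
  | tmul b l =>
    simp only [crossedMul, TensorProduct.lift.tmul, LinearMap.compl₂_apply, LinearMap.comp_apply,
      LinearMap.llcomp_apply, TensorProduct.curry_apply, TensorProduct.map_tmul, hrep l,
      Bialgebra.comul_one, Algebra.TensorProduct.one_def,
      LinearMap.lTensor_tmul, LinearMap.rTensor_tmul, map_sum, TensorProduct.tmul_sum,
      TensorProduct.sum_tmul, LinearEquiv.coe_coe, TensorProduct.assoc_symm_tmul,
      TensorProduct.tensorTensorTensorComm_tmul, LinearMap.mul'_apply, hw.2.2, (hn _).2,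
      one_mul, mul_smul_comm, mul_one]
    simp only [← TensorProduct.smul_tmul']
    exact counit_left hrep (TensorProduct.mk k A H b) l

include hrep hw hn in
theorem crossedMul_one_right (z : A ⊗[k] H) : crossedMul k A H σ f z (1 ⊗ₜ[k] 1) = z := by
  induction z using TensorProduct.induction_on with
  | zero => simp
  | add x y hx hy => rw [map_add, LinearMap.add_apply, hx, hy]
  | tmul b l =>
    simp only [crossedMul, TensorProduct.lift.tmul, LinearMap.compl₂_apply, LinearMap.comp_apply,
      LinearMap.llcomp_apply, TensorProduct.curry_apply, TensorProduct.map_tmul, hrep l,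
      Bialgebra.comul_one, Algebra.TensorProduct.one_def,
      LinearMap.lTensor_tmul, LinearMap.rTensor_tmul, map_sum, TensorProduct.tmul_sum,
      TensorProduct.sum_tmul, LinearEquiv.coe_coe, TensorProduct.assoc_symm_tmul,
      TensorProduct.tensorTensorTensorComm_tmul, LinearMap.mul'_apply, hw.2.1, (hn _).1,
      hrep (c₁ l _), smul_mul_assoc,
      one_mul, mul_smul_comm, mul_one]
    have e : ∀ (x y : H), ∑ j ∈ Finset.range (n x), (Coalgebra.counit (R := k) (c₂ x j) •
        Coalgebra.counit (R := k) (c₁ x j) • b) ⊗ₜ[k] y = 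
        Coalgebra.counit (R := k) x • (b ⊗ₜ[k] y) := by
      intro x y
      simp only [← TensorProduct.smul_tmul']
      exact counit_right hrep ((LinearMap.toSpanSingleton k _ (b ⊗ₜ[k] y)) ∘ₗ
        Coalgebra.counit (R := k) (A := H)) x
    simp only [e]
    exact counit_left hrep (TensorProduct.mk k A H b) l

end crossed2
end HochAux9

open TensorProduct
noncomputable section HochAux10
open WithConv

section ringstr
/-- The underlying module of the crossed product. -/
def CPt (k A H : Type*) [CommRing k] [Ring A] [Algebra k A] [Ring H] [HopfAlgebra k H] : Type _ :=
  A ⊗[k] H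

variable {k A H : Type*} [CommRing k] [Ring A] [Algebra k A] [Ring H] [HopfAlgebra k H]
  {n : H → ℕ} {c₁ c₂ : H → ℕ → H} (hrep : IsRep k n c₁ c₂)
  {σ : H →ₗ[k] A →ₗ[k] A} {f finv : H →ₗ[k] H →ₗ[k] A}
  (hw : IsWeakAction k A H n c₁ c₂ σ) (hn : IsNormal k A H f)
  (hco : IsCocycle k A H n c₁ c₂ σ f) (htw : IsTwistedModule k A H n c₁ c₂ σ f)

/-- Change of type. -/
def cpm (x : A ⊗[k] H) : CPt k A H := x

instance : AddCommGroup (CPt k A H) := inferInstanceAs (AddCommGroup (A ⊗[k] H))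
instance : Module k (CPt k A H) := inferInstanceAs (Module k (A ⊗[k] H))

/-- The ring structure. -/
@[reducible] def CPring : Ring (CPt k A H) :=
  { (inferInstance : AddCommGroup (CPt k A H)) with
    mul := fun x y => crossedMul k A H σ f x y
    one := ((1 : A) ⊗ₜ[k] (1 : H) : A ⊗[k] H)
    mul_assoc := crossedMul_assoc hrep hw hco htw
    one_mul := crossedMul_one_left hrep hw hn
    mul_one := crossedMul_one_right hrep hw hn
    left_distrib := fun x y z => map_add (crossedMul k A H σ f x) y z
    right_distrib := fun x y z => LinearMap.map_add₂ (crossedMul k A H σ f) x y z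
    zero_mul := fun x => LinearMap.map_zero₂ (crossedMul k A H σ f) x
    mul_zero := fun x => map_zero (crossedMul k A H σ f x) }

/-- The algebra structure. -/
@[reducible] def CPalg : @Algebra k (CPt k A H) _ (CPring hrep hw hn hco htw).toSemiring :=
  letI := CPring hrep hw hn hco htw
  Algebra.ofModule (fun r x y => LinearMap.map_smul₂ (crossedMul k A H σ f) r x y)
    (fun r x y => map_smul (crossedMul k A H σ f x) r y)

end ringstr

section swsum
variable {H M : Type*} [Ring H] [AddCommMonoid M]
theorem swSum_eq (n : H → ℕ) (c₁ c₂ : H → ℕ → H) (m : ℕ) (h : H) (F : (Fin (m + 1) → H) → M) :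
    swSum H n c₁ c₂ m h F = sw n c₁ c₂ m h (fun v => F (fun i => v i)) := by
  induction m generalizing h with
  | zero => rfl
  | succ m ih =>
    rw [swSum, sw]
    refine Finset.sum_congr rfl fun i _ => ?_
    rw [ih]
    simp only [fin_ncons]
end swsum

section bdsum
variable {k A E : Type*} [CommRing k] [Ring A] [Algebra k A] [Ring E] [Algebra k E]
theorem neg_one_zsmul_eq {M : Type*} [AddCommGroup M] [Module k M] (j : ℕ) (y : M) :
    ((-1 : k) ^ j) • y = ((-1 : ℤ) ^ j) • y := by
  rcases Nat.even_or_odd j with hj | hj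
  · rw [hj.neg_one_pow, hj.neg_one_pow, one_smul, one_smul]
  · rw [hj.neg_one_pow, hj.neg_one_pow, neg_smul, neg_smul, one_smul, one_smul]

theorem bd_sum (ι : A →ₐ[k] E) (r : ℕ) (x : E) (a : ℕ → A) :
    (x * ι (a ((0 : Fin (r + 1)) : ℕ))) ⊗ₜ[k]
            (PiTensorProduct.tprod k fun i : Fin r =>
              (Submodule.span k {(1 : A)}).mkQ (a (i.succ : Fin (r + 1))))
          + (∑ j : Fin r, ((-1 : k) ^ ((j : ℕ) + 1)) •
              (x ⊗ₜ[k] (PiTensorProduct.tprod k fun m : Fin r =>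
                if (m : ℕ) < (j : ℕ) then (Submodule.span k {(1 : A)}).mkQ
                  (a (m.castSucc : Fin (r + 1)))
                else if (m : ℕ) = (j : ℕ) then
                  (Submodule.span k {(1 : A)}).mkQ
                    (a (j.castSucc : Fin (r + 1)) * a (j.succ : Fin (r + 1)))
                else (Submodule.span k {(1 : A)}).mkQ (a (m.succ : Fin (r + 1))))))
          + ((-1 : k) ^ (r + 1)) •
              ((ι (a (Fin.last r : Fin (r + 1))) * x) ⊗ₜ[k]
                (PiTensorProduct.tprod k fun i : Fin r =>
                  (Submodule.span k {(1 : A)}).mkQ (a (i.castSucc : Fin (r + 1)))))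
    = ∑ j ∈ Finset.range (r + 2), (-1 : ℤ) ^ j • gen r (fX ι r x a j) (fA r a j) := by
  rw [Finset.sum_range_succ, Finset.sum_range_succ', Finset.sum_range]
  rw [add_comm (∑ j : Fin r, (-1 : ℤ) ^ ((j : ℕ) + 1) • _)]
  refine congrArg₂ (· + ·) (congrArg₂ (· + ·) ?_ ?_) ?_
  · rw [pow_zero, one_smul]
    rfl
  · refine Finset.sum_congr rfl fun j _ => ?_
    have hj : (j : ℕ) ≠ r := j.2.ne
    have e1 : fX ι r x a ((j : ℕ) + 1) = x := by simp [fX, hj]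
    have e2 : fA r a ((j : ℕ) + 1) = mrg (j : ℕ) a := by simp [fA, hj]
    rw [e1, e2]
    refine (neg_one_zsmul_eq (k := k)
      (M := E ⊗[k] (⨂[k]^r (A ⧸ (Submodule.span k {(1 : A)})))) _ _).trans ?_
    refine congrArg (fun y => (-1 : ℤ) ^ ((j : ℕ) + 1) • y) ?_
    refine congrArg (fun y => x ⊗ₜ[k] PiTensorProduct.tprod k y) ?_
    funext m
    simp only [mrg, Fin.val_castSucc, Fin.val_succ]
    split_ifs <;> rfl
  · have e1 : fX ι r x a (r + 1) = ι (a r) * x := by simp [fX]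
    have e2 : fA r a (r + 1) = a := by simp [fA]
    rw [e1, e2]
    refine (neg_one_zsmul_eq (k := k)
      (M := E ⊗[k] (⨂[k]^r (A ⧸ (Submodule.span k {(1 : A)})))) _ _).trans ?_
    rfl
end bdsum

end HochAux10

section Statement13

variable (k A H : Type*) [CommRing k] [Ring A] [Algebra k A] [Ring H] [HopfAlgebra k H]

/-- The modules `E ⊗ Ā^{⊗r}` of the Hochschild complex of `A` with coefficients in
`E = A #_f H`, where `Ā = A / k·1_A`. -/
abbrev HochM (r : ℕ) : Type _ :=
  (A ⊗[k] H) ⊗[k] (⨂[k]^r (A ⧸ (Submodule.span k {(1 : A)})))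

/-- For all `h, l ∈ H` the endomorphisms of the Hochschild homology
`H_*(A, E)` induced by `ϑ^h ∘ ϑ^l` and by `ϑ^{hl}` coincide in every degree (i.e. on every
cycle their values differ by a boundary); consequently `H_*(A, E)` is a left `H`-module. -/
theorem theta_action_on_homology
    (σ : H →ₗ[k] A →ₗ[k] A) (f finv : H →ₗ[k] H →ₗ[k] A)
    (n : H → ℕ) (c₁ c₂ : H → ℕ → H)
    (hrep : IsSweedlerRep k H n c₁ c₂)
    (hweak : IsWeakAction k A H n c₁ c₂ σ)
    (hnormal : IsNormal k A H f)
    (hcocycle : IsCocycle k A H n c₁ c₂ σ f)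
    (htwisted : IsTwistedModule k A H n c₁ c₂ σ f)
    (hinv : IsConvInverse k A H n c₁ c₂ f finv)
    -- the Hochschild boundary map of `A` with coefficients in `E`:
    (bd : ∀ r : ℕ, HochM k A H (r + 1) →ₗ[k] HochM k A H r)
    (hbd : ∀ (r : ℕ) (x : A ⊗[k] H) (a : Fin (r + 1) → A),
      bd r (x ⊗ₜ[k]
          (PiTensorProduct.tprod k fun i : Fin (r + 1) =>
            (Submodule.span k {(1 : A)}).mkQ (a i))) =
        (crossedMul k A H σ f x ((a 0) ⊗ₜ[k] (1 : H))) ⊗ₜ[k]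
            (PiTensorProduct.tprod k fun i : Fin r =>
              (Submodule.span k {(1 : A)}).mkQ (a i.succ))
          + (∑ j : Fin r, ((-1 : k) ^ ((j : ℕ) + 1)) •
              (x ⊗ₜ[k] (PiTensorProduct.tprod k fun m : Fin r =>
                if (m : ℕ) < (j : ℕ) then (Submodule.span k {(1 : A)}).mkQ (a m.castSucc)
                else if (m : ℕ) = (j : ℕ) then
                  (Submodule.span k {(1 : A)}).mkQ (a j.castSucc * a j.succ)
                else (Submodule.span k {(1 : A)}).mkQ (a m.succ))))
          + ((-1 : k) ^ (r + 1)) •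
              ((crossedMul k A H σ f ((a (Fin.last r)) ⊗ₜ[k] (1 : H)) x) ⊗ₜ[k]
                (PiTensorProduct.tprod k fun i : Fin r =>
                  (Submodule.span k {(1 : A)}).mkQ (a i.castSucc))))
    -- the chain endomorphisms `ϑ^h`:
    (theta : H → ∀ r : ℕ, HochM k A H r →ₗ[k] HochM k A H r)
    (htheta : ∀ (h : H) (r : ℕ) (x : A ⊗[k] H) (a : Fin r → A),
      theta h r (x ⊗ₜ[k]
          (PiTensorProduct.tprod k fun i : Fin r =>
            (Submodule.span k {(1 : A)}).mkQ (a i))) =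
        swSum (H := H) n c₁ c₂ (r + 1) h (fun v : Fin (r + 2) → H =>
          (crossedMul k A H σ f
              (crossedMul k A H σ f (gam k A H (v (Fin.last (r + 1)))) x)
              (gammaInv k A H finv (v 0))) ⊗ₜ[k]
            (PiTensorProduct.tprod k fun i : Fin r =>
              (Submodule.span k {(1 : A)}).mkQ (σ (v i.succ.castSucc) (a i))))) :
    ∀ h l : H,
      (∀ z : HochM k A H 0, ∃ w : HochM k A H 1,
        theta h 0 (theta l 0 z) - theta (h * l) 0 z = bd 0 w) ∧
      (∀ (r : ℕ) (z : HochM k A H (r + 1)), bd r z = 0 →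
        ∃ w : HochM k A H (r + 2),
          theta h (r + 1) (theta l (r + 1) z) - theta (h * l) (r + 1) z = bd (r + 1) w) := by
  intro h l
  letI iR : Ring (CPt k A H) := CPring hrep hweak hnormal hcocycle htwisted
  letI iAl : Algebra k (CPt k A H) := CPalg hrep hweak hnormal hcocycle htwisted
  have mul_def : ∀ x y : CPt k A H, x * y = crossedMul k A H σ f x y := fun _ _ => rfl
  have one_def : (1 : CPt k A H) = ((1 : A) ⊗ₜ[k] (1 : H) : A ⊗[k] H) := rfl
  have hg1 : Gam σ f 1 = 1 := LinearMap.ext (crossedMul_one_left hrep hweak hnormal)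
  have hA : ∀ (a : A) (x : CPt k A H), cpm (a ⊗ₜ[k] (1 : H)) * x =
      lam k A H a x := by
    intro a x
    rw [mul_def]
    show crossedMul k A H σ f (a ⊗ₜ[k] (1 : H)) x = _
    rw [crossedMul_eq, hg1, mul_one]
  let ι : A →ₐ[k] CPt k A H := AlgHom.ofLinearMap
    (show A →ₗ[k] CPt k A H from (TensorProduct.mk k A H).flip 1) rfl
    (fun x y => ((hA x _).trans (lam_tmul x y 1)).symm)
  let γ : WithConv (H →ₗ[k] CPt k A H) :=
    WithConv.toConv (show H →ₗ[k] CPt k A H from gam k A H)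
  let γi : WithConv (H →ₗ[k] CPt k A H) :=
    WithConv.toConv (show H →ₗ[k] CPt k A H from gammaInv k A H finv)
  let p : CPt k A H →ₗ[k] A :=
    (show A ⊗[k] H →ₗ[k] A from (TensorProduct.rid k A).toLinearMap ∘ₗ
      LinearMap.lTensor A (Coalgebra.counit (R := k)))
  have hιγ : ∀ a h, ι a * γ h = (a ⊗ₜ[k] h : A ⊗[k] H) := by
    intro a h
    refine (hA a _).trans ((lam_tmul a 1 h).trans ?_)
    rw [mul_one]
  have R1 : ∀ a, γ * cst k H (ι a) = iA ι (σ.flip a) * γ := by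
    intro a
    refine WithConv.ofConv_injective (LinearMap.ext fun h => ?_)
    rw [mul_cst_apply, conv_apply_rep hrep]
    have e := congrArg (fun t => t h ((1 : A) ⊗ₜ[k] (1 : H))) (Gam_cst (f := f) hrep hweak.1 a)
    simp only [mul_cst_apply, conv_apply_rep hrep (iA (lam k A H) (σ.flip a)),
      Module.End.mul_apply, LinearMap.sum_apply] at e
    simp only [lam_tmul, mul_one] at e
    refine Eq.trans e ?_
    refine Finset.sum_congr rfl fun i _ => ?_
    have e1 : Gam σ f (c₂ h i) (1 ⊗ₜ[k] 1) = 1 ⊗ₜ[k] c₂ h i :=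
      crossedMul_one_right hrep hweak hnormal _
    rw [e1]
    exact (hA _ _).symm
  have R2 : pull (pr1 k H H) γ * pull (pr2 k H H) γ =
      iA ι (TensorProduct.lift f) * pull (Bialgebra.mulCoalgHom k H) γ := by
    refine WithConv.ofConv_injective (TensorProduct.ext' fun h l => ?_)
    rw [pr1_pr2, conv_tmul hrep hrep]
    refine Eq.trans (Gam_one_tmul (f := f) hweak.2.1 h l) ?_
    rw [NN_apply hrep]
    refine Finset.sum_congr rfl fun i _ => Finset.sum_congr rfl fun j _ => ?_
    exact (hιγ _ _).symm
  have R3 : γ 1 = 1 := rfl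
  have hp : ∀ a h, p (ι a * γ h) = Coalgebra.counit (R := k) h • a := by
    intro a h
    rw [hιγ]
    show (TensorProduct.rid k A) (LinearMap.lTensor A (Coalgebra.counit (R := k)) (a ⊗ₜ[k] h)) = _
    simp
  have hf : iA ι (TensorProduct.lift finv) * iA ι (TensorProduct.lift f) = 1 := by
    refine WithConv.ofConv_injective (TensorProduct.ext' fun h l => ?_)
    rw [conv_tmul hrep hrep]
    have e := congrArg ι (hinv h l).2
    simp only [map_sum, map_mul, map_smul, map_one] at e
    refine Eq.trans e ?_
    simp [LinearMap.convOne_def, Algebra.algebraMap_eq_smul_one, mul_comm]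
  have hγi : ∀ h, γi h = ∑ i ∈ Finset.range (n h), ∑ j ∈ Finset.range (n (c₂ h i)),
      ι (finv (HopfAlgebra.antipode k (c₁ (c₂ h i) j)) (c₂ (c₂ h i) j)) *
        γ (HopfAlgebra.antipode k (c₁ h i)) := by
    intro h
    simp only [hιγ]
    have e : gammaInv k A H finv h = ∑ i ∈ Finset.range (n h), ∑ j ∈ Finset.range (n (c₂ h i)),
      (finv (HopfAlgebra.antipode k (c₁ (c₂ h i) j)) (c₂ (c₂ h i) j)) ⊗ₜ[k]
        (HopfAlgebra.antipode k (c₁ h i)) := by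
      simp only [gammaInv, LinearMap.comp_apply, hrep h, hrep (c₂ h _), map_sum,
        LinearMap.lTensor_tmul, TensorProduct.map_tmul, LinearMap.rTensor_tmul,
        TensorProduct.tmul_sum, TensorProduct.lift.tmul, LinearEquiv.coe_coe,
        TensorProduct.comm_tmul]
    exact e
  have hθ : ∀ h r (x : CPt k A H) (a : ℕ → A), theta h r (gen r x a) = sw n c₁ c₂ (r + 1) h (fun v =>
      gen r (γ (v (r + 1)) * x * γi (v 0)) (fun i => σ (v (i + 1)) (a i))) := by
    intro h r x a
    refine Eq.trans (htheta h r x (fun i => a i)) ?_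
    rw [swSum_eq]
    rfl
  have hbd' : ∀ r (x : CPt k A H) (a : ℕ → A), bd r (gen (r + 1) x a) =
      ∑ j ∈ Finset.range (r + 2), (-1 : ℤ) ^ j • gen r (fX ι r x a j) (fA r a j) := by
    intro r x a
    exact Eq.trans (hbd r x (fun i => a i)) (bd_sum ι r x a)
  exact abs_final hrep hweak.1 hweak.2.1 R1 R2 R3 hp hf hγi bd hbd' theta hθ h l

end Statement13
end

section
/- Assume conditions (i)–(iii) hold, so E = A #_f H is a crossed product, let Ȟ = H/[H,H] be the quotient coalgebra of H by the coideal spanned by all commutators hl − lh, and write h̄ for the class of h in Ȟ. For each n ≥ 0 define the k-linear map ρ_n : E^{⊗(n+1)} → E^{⊗(n+1)} ⊗_k Ȟ by ρ_n((a_0#h_0) ⊗ ⋯ ⊗ (a_n#h_n)) = (a_0#h_0^{(1)}) ⊗ ⋯ ⊗ (a_n#h_n^{(1)}) ⊗ (h_0^{(2)} ⋯ h_n^{(2)})‾. Then ρ commutes with the Hochschild boundary b of E, namely (b ⊗ id_Ȟ) ∘ ρ_n = ρ_{n-1} ∘ b where b(x_0 ⊗ ⋯ ⊗ x_n) = Σ_{i=0}^{n-1}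 (−1)^i x_0 ⊗ ⋯ ⊗ x_i x_{i+1} ⊗ ⋯ ⊗ x_n + (−1)^n x_n x_0 ⊗ x_1 ⊗ ⋯ ⊗ x_{n-1}, and ρ commutes with the signed cyclic operator t, namely (t ⊗ id_Ȟ) ∘ ρ_n = ρ_n ∘ t where t(x_0 ⊗ ⋯ ⊗ x_n) = (−1)^n x_n ⊗ x_0 ⊗ ⋯ ⊗ x_{n-1}. (Hence ρ is a morphism of mixed complexes, commuting with b and with Connes' operator B.) -/
open TensorProduct

section Statement14

variable (k A H : Type*) [CommRing k] [Ring A] [Algebra k A] [Ring H] [HopfAlgebra k H]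

/-- The commutator submodule `[H,H]` of `H`. -/
abbrev commSub : Submodule k H := Submodule.span k {x : H | ∃ h l : H, x = h * l - l * h}

/-- The quotient coalgebra `Ȟ = H/[H,H]` (as a `k`-module). -/
abbrev Hbar : Type _ := H ⧸ commSub k H

/-- The modules `E^{⊗(n+1)}` of the cyclic complex of `E = A #_f H`. -/
abbrev CycM (m : ℕ) : Type _ := ⨂[k]^(m + 1) (A ⊗[k] H)

/-- Two multilinear maps on tensor products agreeing on pure tensors are equal. -/
theorem multilinear_ext_tmul {k : Type*} [CommRing k] {X Y W : Type*} [AddCommMonoid X] [Module k X]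
    [AddCommMonoid Y] [Module k Y] [AddCommMonoid W] [Module k W] {N : ℕ}
    (F G : MultilinearMap k (fun _ : Fin N => X ⊗[k] Y) W)
    (h : ∀ (x : Fin N → X) (y : Fin N → Y),
      F (fun i => x i ⊗ₜ[k] y i) = G (fun i => x i ⊗ₜ[k] y i)) : F = G := by
  classical
  ext z
  choose S hS using fun i => TensorProduct.exists_finset (R := k) (z i)
  have hz : z = fun i => ∑ p ∈ S i, p.1 ⊗ₜ[k] p.2 := funext hS
  rw [hz, MultilinearMap.map_sum_finset, MultilinearMap.map_sum_finset]
  exact Finset.sum_congr rfl fun r _ => h _ _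

/-- The face map, contracting positions `i, i+1` by `μ`. -/
def faceML {k : Type*} [CommRing k] {V W : Type*} [AddCommMonoid V] [Module k V]
    [AddCommMonoid W] [Module k W] {m : ℕ} (μ : V →ₗ[k] V →ₗ[k] V)
    (F : MultilinearMap k (fun _ : Fin (m + 1) => V) W) (i : Fin (m + 1)) :
    MultilinearMap k (fun _ : Fin (m + 2) => V) W :=
  have key : ∀ (inst : DecidableEq (Fin (m + 2))) (z : Fin (m + 2) → V) (q : Fin (m + 2)) (v : V),
      (fun j : Fin (m + 1) =>
        if (j : ℕ) < (i : ℕ) then Function.update z q v j.castSucc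
        else if (j : ℕ) = (i : ℕ) then
          μ (Function.update z q v i.castSucc) (Function.update z q v i.succ)
        else Function.update z q v j.succ) =
      Function.update (fun j : Fin (m + 1) =>
        if (j : ℕ) < (i : ℕ) then z j.castSucc
        else if (j : ℕ) = (i : ℕ) then μ (z i.castSucc) (z i.succ)
        else z j.succ) (i.predAbove q)
        (if q = i.castSucc then μ v (z i.succ) else if q = i.succ then μ (z i.castSucc) v
          else v) := by
    intro inst z q v
    ext j
    have hp : ((i.predAbove q : Fin (m + 1)) : ℕ) = if (i : ℕ) < q then (q : ℕ) - 1 else q := by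
      rw [Fin.predAbove]
      simp only [Fin.lt_def, Fin.val_castSucc]
      split_ifs <;> simp
    simp only [Function.update_apply, Fin.ext_iff, Fin.val_castSucc, Fin.val_succ, hp]
    split_ifs <;> first | rfl | (exfalso; omega)
  { toFun := fun z => F fun j : Fin (m + 1) =>
        if (j : ℕ) < (i : ℕ) then z j.castSucc
        else if (j : ℕ) = (i : ℕ) then μ (z i.castSucc) (z i.succ)
        else z j.succ
    map_update_add' := by
      intro inst z q v w
      simp only [key]
      split_ifs <;> simp
    map_update_smul' := by
      intro inst z q c v
      simp only [key]
      split_ifs <;> simp }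

theorem faceML_apply {k : Type*} [CommRing k] {V W : Type*} [AddCommMonoid V] [Module k V]
    [AddCommMonoid W] [Module k W] {m : ℕ} (μ : V →ₗ[k] V →ₗ[k] V)
    (F : MultilinearMap k (fun _ : Fin (m + 1) => V) W) (i : Fin (m + 1)) (z : Fin (m + 2) → V) :
    faceML μ F i z = F fun j : Fin (m + 1) =>
        if (j : ℕ) < (i : ℕ) then z j.castSucc
        else if (j : ℕ) = (i : ℕ) then μ (z i.castSucc) (z i.succ)
        else z j.succ := rfl

theorem prod_contract {G : Type*} [Monoid G] {m : ℕ} (g : Fin (m + 2) → G) (i : Fin (m + 1)) :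
    (List.ofFn fun j : Fin (m + 1) =>
        if (j : ℕ) < (i : ℕ) then g j.castSucc
        else if (j : ℕ) = (i : ℕ) then g i.castSucc * g i.succ
        else g j.succ).prod = (List.ofFn g).prod := by
  induction m with
  | zero =>
    have : i = 0 := by omega
    subst this
    simp
  | succ m ih =>
    rw [List.ofFn_succ, List.prod_cons]
    refine Fin.cases ?_ (fun i => ?_) i
    · rw [List.ofFn_succ (f := g), List.prod_cons, List.ofFn_succ, List.prod_cons]
      simp [mul_assoc]
    · rw [List.ofFn_succ (f := g), List.prod_cons, ← ih (fun j => g j.succ) i]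
      simp

theorem prod_rotate {G Q : Type*} [Monoid G] (π : G → Q) (hπ : ∀ a b, π (a * b) = π (b * a))
    {m : ℕ} (g : Fin (m + 1) → G) :
    π (List.ofFn fun j : Fin (m + 1) => g (j + Fin.last m)).prod = π (List.ofFn g).prod := by
  have h1 : (fun j : Fin (m + 1) => g (j + Fin.last m)) =
      Fin.cons (g (Fin.last m)) (fun j : Fin m => g j.castSucc) := by
    ext j
    refine Fin.cases ?_ (fun j => ?_) j
    · simp
    · simp only [Fin.cons_succ]
      congr 1
      rw [Fin.ext_iff, Fin.val_add]
      simp only [Fin.val_succ, Fin.val_last, Fin.val_castSucc]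
      rw [show (j : ℕ) + 1 + m = j + (m + 1) by ring, Nat.add_mod_right, Nat.mod_eq_of_lt (by omega)]
  rw [h1, List.ofFn_cons, List.prod_cons, hπ, List.ofFn_succ', List.concat_eq_append,
    List.prod_append, List.prod_singleton]

theorem add_last_succ {m : ℕ} (j : Fin m) : j.succ + Fin.last m = j.castSucc := by
  rw [Fin.ext_iff, Fin.val_add]
  simp only [Fin.val_succ, Fin.val_last, Fin.val_castSucc]
  rw [show (j : ℕ) + 1 + m = j + (m + 1) by ring, Nat.add_mod_right, Nat.mod_eq_of_lt (by omega)]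

/-- The multilinear map `(y_i ⊗ g_i)_i ↦ (y_0 ⊗ ⋯ ⊗ y_m) ⊗ g_0 ⋯ g_m`. -/
theorem exists_collect {k : Type*} [CommRing k] (V H : Type*) [AddCommMonoid V] [Module k V]
    [Ring H] [Algebra k H] (N : ℕ) :
    ∃ F : MultilinearMap k (fun _ : Fin N => V ⊗[k] H) ((⨂[k]^N V) ⊗[k] H),
      ∀ (y : Fin N → V) (g : Fin N → H), F (fun i => y i ⊗ₜ[k] g i) =
        (PiTensorProduct.tprod k y) ⊗ₜ[k] (List.ofFn g).prod := by
  refine ⟨(LinearMap.rTensor H (DirectSum.component k ℕ (fun n => ⨂[k]^n V) N ∘ₗ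
    (TensorAlgebra.toDirectSum (R := k) (M := V)).toLinearMap)).compMultilinearMap
    ((MultilinearMap.mkPiAlgebraFin k N (TensorAlgebra k V ⊗[k] H)).compLinearMap
      (fun _ => LinearMap.rTensor H (TensorAlgebra.ι k))), fun y g => ?_⟩
  have : ∀ (N : ℕ) (y : Fin N → V) (g : Fin N → H),
      (List.ofFn fun i => TensorAlgebra.ι k (y i) ⊗ₜ[k] g i).prod =
        (TensorAlgebra.tprod k V N y) ⊗ₜ[k] (List.ofFn g).prod := by
    intro N y g
    induction N with
    | zero => simp [Algebra.TensorProduct.one_def]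
    | succ N ih => simp [List.ofFn_succ, ih]
  simp only [LinearMap.compMultilinearMap_apply, MultilinearMap.compLinearMap_apply,
    MultilinearMap.mkPiAlgebraFin_apply, LinearMap.rTensor_tmul, this, LinearMap.comp_apply,
    AlgHom.toLinearMap_apply, TensorAlgebra.toDirectSum_tensorPower_tprod]
  congr 1
  rw [← DirectSum.lof_eq_of k]
  exact DirectSum.component.lof_self ..

/-- product on `E ⊗ H`. -/
def mulEH (k A H : Type*) [CommRing k] [Ring A] [Algebra k A] [Ring H] [HopfAlgebra k H]
    (σ : H →ₗ[k] A →ₗ[k] A) (f : H →ₗ[k] H →ₗ[k] A) :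
    ((A ⊗[k] H) ⊗[k] H) →ₗ[k] ((A ⊗[k] H) ⊗[k] H) →ₗ[k] ((A ⊗[k] H) ⊗[k] H) :=
  TensorProduct.map₂ (crossedMul k A H σ f) (LinearMap.mul k H)

theorem one_add_last {m : ℕ} : (1 : Fin (m + 2)) + Fin.last (m + 1) = 0 := by
  have := add_last_succ (0 : Fin (m + 1))
  simpa using this

/-- `((p ⊗ q) ⊗ l) ↦ a σ_p(b) f(q,l)`. -/
def psiMap (k A H : Type*) [CommRing k] [Ring A] [Algebra k A] [Ring H] [HopfAlgebra k H]
    (σ : H →ₗ[k] A →ₗ[k] A) (f : H →ₗ[k] H →ₗ[k] A) (a b : A) :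
    ((H ⊗[k] H) ⊗[k] H) →ₗ[k] A :=
  LinearMap.mulLeft k a ∘ₗ LinearMap.mul' k A ∘ₗ
    (TensorProduct.map (σ.flip b) (TensorProduct.lift f)) ∘ₗ
    (TensorProduct.assoc k H H H).toLinearMap

/-- The multiplication with comultiplications already performed. -/
def cMap (k A H : Type*) [CommRing k] [Ring A] [Algebra k A] [Ring H] [HopfAlgebra k H]
    (σ : H →ₗ[k] A →ₗ[k] A) (f : H →ₗ[k] H →ₗ[k] A) (a b : A) :
    ((H ⊗[k] H) ⊗[k] H) →ₗ[k] (H ⊗[k] H) →ₗ[k] A ⊗[k] H :=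
  TensorProduct.curry (TensorProduct.map (psiMap k A H σ f a b) (LinearMap.mul' k H) ∘ₗ
    (TensorProduct.tensorTensorTensorComm k (H ⊗[k] H) H H H).toLinearMap)

theorem cMap_tmul (k A H : Type*) [CommRing k] [Ring A] [Algebra k A] [Ring H] [HopfAlgebra k H]
    (σ : H →ₗ[k] A →ₗ[k] A) (f : H →ₗ[k] H →ₗ[k] A) (a b : A) (P : H ⊗[k] H) (h l l' : H) :
    cMap k A H σ f a b (P ⊗ₜ[k] h) (l ⊗ₜ[k] l') =
      psiMap k A H σ f a b (P ⊗ₜ[k] l) ⊗ₜ[k] (h * l') := by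
  simp [cMap]

set_option synthInstance.maxHeartbeats 400000 in
set_option maxHeartbeats 1000000 in
theorem crossedMul_eq_s14 (k A H : Type*) [CommRing k] [Ring A] [Algebra k A] [Ring H]
    [HopfAlgebra k H]
    (σ : H →ₗ[k] A →ₗ[k] A) (f : H →ₗ[k] H →ₗ[k] A) (a b : A) (h l : H) :
    crossedMul k A H σ f (a ⊗ₜ[k] h) (b ⊗ₜ[k] l) =
      cMap k A H σ f a b (LinearMap.rTensor H (Coalgebra.comul (R := k))
        (Coalgebra.comul (R := k) h)) (Coalgebra.comul (R := k) l) := by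
  simp only [crossedMul, TensorProduct.lift.tmul, LinearMap.compl₂_apply, LinearMap.comp_apply,
    LinearMap.llcomp_apply, TensorProduct.curry_apply, TensorProduct.map_tmul,
    LinearMap.lTensor_tmul, LinearEquiv.coe_coe]
  generalize LinearMap.rTensor H (Coalgebra.comul (R := k)) (Coalgebra.comul (R := k) h) = X
  generalize Coalgebra.comul (R := k) l = Y
  induction Y with
  | zero => simp
  | add Y Y' hY hY' => simp only [TensorProduct.tmul_add, map_add, hY, hY']
  | tmul l l' =>
    induction X with
    | zero => simp
    | add X X' hX hX' =>
      simp only [TensorProduct.add_tmul, TensorProduct.tmul_add, map_add, hX, hX',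
        LinearMap.add_apply]
    | tmul P h =>
      rw [cMap_tmul]
      induction P with
      | zero => simp
      | add X X' hX hX' =>
        simp only [TensorProduct.add_tmul, TensorProduct.tmul_add, map_add, hX, hX']
      | tmul p q => simp [psiMap]

theorem nuE_cMap (k A H : Type*) [CommRing k] [Ring A] [Algebra k A] [Ring H]
    [HopfAlgebra k H]
    (σ : H →ₗ[k] A →ₗ[k] A) (f : H →ₗ[k] H →ₗ[k] A) (a b : A)
    (X : (H ⊗[k] H) ⊗[k] H) (Y : H ⊗[k] H) :
    nuE k A H (cMap k A H σ f a b X Y) =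
      TensorProduct.map₂ (cMap k A H σ f a b) (LinearMap.mul k H)
        ((TensorProduct.assoc k (H ⊗[k] H) H H).symm
          (LinearMap.lTensor (H ⊗[k] H) (Coalgebra.comul (R := k)) X))
        ((TensorProduct.assoc k H H H).symm
          (LinearMap.lTensor H (Coalgebra.comul (R := k)) Y)) := by
  induction Y with
  | zero => simp
  | add Y Y' hY hY' => simp only [map_add, hY, hY']
  | tmul l l' =>
    induction X with
    | zero => simp
    | add X X' hX hX' => simp only [map_add, hX, hX', LinearMap.add_apply]
    | tmul P h =>
      rw [cMap_tmul, nuE]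
      simp only [LinearMap.comp_apply, LinearMap.lTensor_tmul, Bialgebra.comul_mul,
        LinearEquiv.coe_coe]
      generalize Coalgebra.comul (R := k) h = X
      generalize Coalgebra.comul (R := k) l' = Y
      induction Y with
      | zero => simp
      | add Y Y' hY hY' => simp only [TensorProduct.tmul_add, mul_add, map_add, hY, hY']
      | tmul l₁ l₂ =>
        induction X with
        | zero => simp
        | add X X' hX hX' =>
          simp only [TensorProduct.tmul_add, add_mul, map_add, hX, hX', LinearMap.add_apply]
        | tmul h₁ h₂ => simp [cMap_tmul]

theorem comul_four (k H : Type*) [CommRing k] [Ring H] [HopfAlgebra k H] (h : H) :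
    (TensorProduct.assoc k (H ⊗[k] H) H H).symm
      (LinearMap.lTensor (H ⊗[k] H) (Coalgebra.comul (R := k))
        (LinearMap.rTensor H (Coalgebra.comul (R := k)) (Coalgebra.comul (R := k) h))) =
    LinearMap.rTensor H (LinearMap.rTensor H (Coalgebra.comul (R := k)))
      (LinearMap.rTensor H (Coalgebra.comul (R := k)) (Coalgebra.comul (R := k) h)) := by
  rw [← Coalgebra.coassoc_symm_apply]
  rw [Coalgebra.coassoc_symm_apply]
  conv_rhs => rw [← Coalgebra.coassoc_symm_apply]
  generalize Coalgebra.comul (R := k) h = X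
  induction X with
  | zero => simp
  | add X X' hX hX' => simp only [map_add, hX, hX']
  | tmul p q =>
    simp only [LinearMap.lTensor_tmul, LinearMap.rTensor_tmul]
    generalize Coalgebra.comul (R := k) q = Y
    induction Y with
    | zero => simp
    | add X X' hX hX' => simp only [TensorProduct.tmul_add, map_add, hX, hX']
    | tmul p q => simp

theorem nuE_mul (k A H : Type*) [CommRing k] [Ring A] [Algebra k A] [Ring H]
    [HopfAlgebra k H]
    (σ : H →ₗ[k] A →ₗ[k] A) (f : H →ₗ[k] H →ₗ[k] A) (x y : A ⊗[k] H) :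
    nuE k A H (crossedMul k A H σ f x y) =
      mulEH k A H σ f (nuE k A H x) (nuE k A H y) := by
  induction y with
  | zero => simp
  | add Y Y' hY hY' => simp only [map_add, hY, hY']
  | tmul b l =>
    induction x with
    | zero => simp
    | add X X' hX hX' => simp only [map_add, hX, hX', LinearMap.add_apply]
    | tmul a h =>
      rw [crossedMul_eq_s14, nuE_cMap, comul_four, Coalgebra.coassoc_symm_apply, nuE, mulEH]
      simp only [LinearMap.comp_apply, LinearMap.lTensor_tmul, LinearEquiv.coe_coe]
      generalize Coalgebra.comul (R := k) h = X
      generalize Coalgebra.comul (R := k) l = Y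
      induction Y with
      | zero => simp
      | add Y Y' hY hY' => simp only [TensorProduct.tmul_add, map_add, hY, hY']
      | tmul l₁ l₂ =>
        induction X with
        | zero => simp
        | add X X' hX hX' =>
          simp only [TensorProduct.tmul_add, map_add, hX, hX', LinearMap.add_apply]
        | tmul h₁ h₂ => simp [crossedMul_eq_s14]

/-- The maps
`ρ_n((a₀#h₀) ⊗ ⋯ ⊗ (a_n#h_n)) = (a₀#h₀⁽¹⁾) ⊗ ⋯ ⊗ (a_n#h_n⁽¹⁾) ⊗ (h₀⁽²⁾⋯h_n⁽²⁾)‾`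
commute with the Hochschild boundary `b` and with the signed cyclic operator `t` of the
crossed product `E = A #_f H` (hence `ρ` is a morphism of mixed complexes). -/
theorem rho_commutes_with_b_and_t
    (σ : H →ₗ[k] A →ₗ[k] A) (f : H →ₗ[k] H →ₗ[k] A)
    (n : H → ℕ) (c₁ c₂ : H → ℕ → H)
    (hrep : IsSweedlerRep k H n c₁ c₂)
    (hweak : IsWeakAction k A H n c₁ c₂ σ)
    (hnormal : IsNormal k A H f)
    (hcocycle : IsCocycle k A H n c₁ c₂ σ f)
    (htwisted : IsTwistedModule k A H n c₁ c₂ σ f)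
    -- the maps `ρ_m : E^{⊗(m+1)} → E^{⊗(m+1)} ⊗ Ȟ`:
    (ρ : ∀ m : ℕ, CycM k A H m →ₗ[k] (CycM k A H m ⊗[k] Hbar k H))
    (hρ : ∀ (m : ℕ) (a : Fin (m + 1) → A) (hh : Fin (m + 1) → H),
      ρ m (PiTensorProduct.tprod k fun i : Fin (m + 1) => (a i) ⊗ₜ[k] (hh i)) =
        ∑ p ∈ Fintype.piFinset (fun i : Fin (m + 1) => Finset.range (n (hh i))),
          (PiTensorProduct.tprod k fun i : Fin (m + 1) => (a i) ⊗ₜ[k] c₁ (hh i) (p i)) ⊗ₜ[k]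
            (commSub k H).mkQ ((List.ofFn fun i : Fin (m + 1) => c₂ (hh i) (p i)).prod))
    -- the Hochschild boundary `b` of `E`:
    (bd : ∀ m : ℕ, CycM k A H (m + 1) →ₗ[k] CycM k A H m)
    (hbd : ∀ (m : ℕ) (x : Fin (m + 2) → A ⊗[k] H),
      bd m (PiTensorProduct.tprod k x) =
        (∑ i : Fin (m + 1), ((-1 : k) ^ (i : ℕ)) •
            (PiTensorProduct.tprod k fun j : Fin (m + 1) =>
              if (j : ℕ) < (i : ℕ) then x j.castSucc
              else if (j : ℕ) = (i : ℕ) then crossedMul k A H σ f (x i.castSucc) (x i.succ)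
              else x j.succ))
          + ((-1 : k) ^ (m + 1)) •
              (PiTensorProduct.tprod k fun j : Fin (m + 1) =>
                if j = 0 then crossedMul k A H σ f (x (Fin.last (m + 1))) (x 0)
                else x j.castSucc))
    -- the signed cyclic operator `t` of `E`:
    (t : ∀ m : ℕ, CycM k A H m →ₗ[k] CycM k A H m)
    (ht : ∀ (m : ℕ) (x : Fin (m + 1) → A ⊗[k] H),
      t m (PiTensorProduct.tprod k x) =
        ((-1 : k) ^ m) •
          (PiTensorProduct.tprod k fun j : Fin (m + 1) => x (j + Fin.last m))) :
    (∀ m : ℕ, (LinearMap.rTensor (Hbar k H) (bd m)) ∘ₗ (ρ (m + 1)) = (ρ m) ∘ₗ (bd m)) ∧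
    (∀ m : ℕ, (LinearMap.rTensor (Hbar k H) (t m)) ∘ₗ (ρ m) = (ρ m) ∘ₗ (t m)) := by
  classical
  choose col hcol using fun m : ℕ => exists_collect (k := k) (A ⊗[k] H) H (m + 1)
  let Φ : ∀ m : ℕ, MultilinearMap k (fun _ : Fin (m + 1) => (A ⊗[k] H) ⊗[k] H)
      (CycM k A H m ⊗[k] Hbar k H) := fun m =>
    (LinearMap.lTensor (CycM k A H m) (commSub k H).mkQ).compMultilinearMap (col m)
  have hΦ : ∀ (m : ℕ) (y : Fin (m + 1) → A ⊗[k] H) (g : Fin (m + 1) → H),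
      Φ m (fun i => y i ⊗ₜ[k] g i) =
        (PiTensorProduct.tprod k y) ⊗ₜ[k] (commSub k H).mkQ (List.ofFn g).prod := by
    intro m y g
    simp only [Φ, LinearMap.compMultilinearMap_apply, hcol, LinearMap.lTensor_tmul]
  have htr : ∀ a b : H, (commSub k H).mkQ (a * b) = (commSub k H).mkQ (b * a) := by
    intro a b
    rw [← sub_eq_zero, ← map_sub]
    exact (Submodule.Quotient.mk_eq_zero _).2 (Submodule.subset_span ⟨a, b, rfl⟩)
  have hρΦ : ∀ (m : ℕ) (x : Fin (m + 1) → A ⊗[k] H),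
      ρ m (PiTensorProduct.tprod k x) = Φ m (fun i => nuE k A H (x i)) := by
    intro m x
    have : (ρ m).compMultilinearMap (PiTensorProduct.tprod k) =
      (Φ m).compLinearMap (fun _ => nuE k A H) := by
        refine multilinear_ext_tmul _ _ fun a hh => ?_
        simp only [LinearMap.compMultilinearMap_apply, MultilinearMap.compLinearMap_apply, hρ]
        have hnu : (fun i => nuE k A H (a i ⊗ₜ[k] hh i)) = fun i =>
            ∑ p ∈ Finset.range (n (hh i)), (a i ⊗ₜ[k] c₁ (hh i) p) ⊗ₜ[k] c₂ (hh i) p := by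
          ext i
          simp [nuE, hrep (hh i), TensorProduct.tmul_sum]
        rw [hnu, MultilinearMap.map_sum_finset]
        exact Finset.sum_congr rfl fun p _ => (hΦ m _ _).symm
    exact congrArg (fun F => F x) this
  -- rotation
  have hrot : ∀ (m : ℕ) (z : Fin (m + 1) → (A ⊗[k] H) ⊗[k] H),
      LinearMap.rTensor (Hbar k H) (t m) (Φ m z) =
        ((-1 : k) ^ m) • Φ m (fun j => z (j + Fin.last m)) := by
    intro m z
    have : (LinearMap.rTensor (Hbar k H) (t m)).compMultilinearMap (Φ m) =
      ((-1 : k) ^ m) • (Φ m).domDomCongr (Equiv.addRight (Fin.last m)) := by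
        refine multilinear_ext_tmul _ _ fun y g => ?_
        simp only [LinearMap.compMultilinearMap_apply, smul_apply,
          MultilinearMap.domDomCongr_apply, Equiv.coe_addRight, hΦ, LinearMap.rTensor_tmul, ht]
        rw [prod_rotate (commSub k H).mkQ htr, TensorProduct.smul_tmul']
    exact congrArg (fun F => F z) this
  have hface : ∀ (m : ℕ) (z : Fin (m + 2) → (A ⊗[k] H) ⊗[k] H),
      LinearMap.rTensor (Hbar k H) (bd m) (Φ (m + 1) z) =
        (∑ i : Fin (m + 1), ((-1 : k) ^ (i : ℕ)) • faceML (mulEH k A H σ f) (Φ m) i z) +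
          ((-1 : k) ^ (m + 1)) •
            faceML (mulEH k A H σ f) (Φ m) 0 (fun j => z (j + Fin.last (m + 1))) := by
    intro m z
    have hpure : ∀ (i : Fin (m + 1)) (y : Fin (m + 2) → A ⊗[k] H) (g : Fin (m + 2) → H),
        faceML (mulEH k A H σ f) (Φ m) i (fun j => y j ⊗ₜ[k] g j) =
          (PiTensorProduct.tprod k fun j : Fin (m + 1) =>
              if (j : ℕ) < (i : ℕ) then y j.castSucc
              else if (j : ℕ) = (i : ℕ) then crossedMul k A H σ f (y i.castSucc) (y i.succ)
              else y j.succ) ⊗ₜ[k] (commSub k H).mkQ (List.ofFn g).prod := by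
      intro i y g
      rw [← prod_contract g i, ← hΦ, faceML_apply]
      congr 1
      ext j
      split_ifs <;> simp [mulEH]
    have : (LinearMap.rTensor (Hbar k H) (bd m)).compMultilinearMap (Φ (m + 1)) =
      (∑ i : Fin (m + 1), ((-1 : k) ^ (i : ℕ)) • faceML (mulEH k A H σ f) (Φ m) i) +
        ((-1 : k) ^ (m + 1)) •
          (faceML (mulEH k A H σ f) (Φ m) 0).domDomCongr (Equiv.addRight (Fin.last (m + 1))) := by
        refine multilinear_ext_tmul _ _ fun y g => ?_
        simp only [LinearMap.compMultilinearMap_apply, smul_apply,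
          add_apply, sum_apply,
          MultilinearMap.domDomCongr_apply, Equiv.coe_addRight, hΦ, LinearMap.rTensor_tmul, hbd,
          hpure]
        rw [prod_rotate (commSub k H).mkQ htr, TensorProduct.add_tmul, TensorProduct.sum_tmul]
        simp only [TensorProduct.smul_tmul']
        congr 4
        ext j
        refine Fin.cases ?_ (fun j => ?_) j
        · simp [add_last_succ, one_add_last]
        · simp [add_last_succ, one_add_last]
    have h2 := congrArg (fun F => F z) this
    simpa using h2
  refine ⟨fun m => ?_, fun m => ?_⟩
  · refine PiTensorProduct.ext (MultilinearMap.ext fun x => ?_)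
    simp only [LinearMap.compMultilinearMap_apply, LinearMap.comp_apply, hρΦ, hface, hbd, map_add,
      map_sum, map_smul, faceML_apply, ← nuE_mul]
    congr 1
    · refine Finset.sum_congr rfl fun i _ => ?_
      congr 2
      ext j
      split_ifs <;> rfl
    · congr 2
      ext j
      refine Fin.cases ?_ (fun j => ?_) j
      · simp [add_last_succ, one_add_last]
      · simp [add_last_succ, one_add_last]
  · refine PiTensorProduct.ext (MultilinearMap.ext fun x => ?_)
    simp only [LinearMap.compMultilinearMap_apply, LinearMap.comp_apply, hρΦ, hrot, ht, map_smul]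

end Statement14
end
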